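/- Let p be a prime and let ℤ/p act linearly on S^n via an orthogonal representation ρ : ℤ/p → O(n+1) with (S^n)^{ℤ/p} ≠ ∅, so that (S^n)^{ℤ/p} is a great k-sphere S^k for some 0 ≤ k ≤ n. Then TC_{ℤ/p}(S^n) = 2 if and only if both n and k are odd. -/

import Mathlib

open Set unitInterval

namespace PaperTC

variable {G X : Type*}

/-- The orbit of `x` under the action `act`. -/
def orbit (act : G → X → X) (x : X) : Set X := {y | ∃ g, act g x = y}

/-- The fixed point set of the action `act`. -/
def fixedSet (act : G → X → X) : Set X := {x | ∀ g, act g x = x}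

/-- The fixed point set of a subset `S` of the acting group. -/
def fixedSetOf (act : G → X → X) (S : Set G) : Set X := {x | ∀ g ∈ S, act g x = x}

/-- `minCover P` is the least `k ≥ 1` satisfying `P k`, as an element of `ℕ∞`
(equal to `∞` if there is no such `k`). -/
noncomputable def minCover (P : ℕ → Prop) : ℕ∞ :=
  sInf {k : ℕ∞ | ∃ m : ℕ, k = m ∧ 1 ≤ m ∧ P m}

section Plain

variable (Y : Type*) [TopologicalSpace Y]

/-- `Y × Y` can be covered by `k` open sets each admitting a motion planner. -/
def TCcover (k : ℕ) : Prop :=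
  ∃ U : Fin k → Set (Y × Y),
    (∀ i, IsOpen (U i)) ∧ (⋃ i, U i) = univ ∧
    ∀ i, ∃ s : Y × Y → C(I, Y),
      ContinuousOn s (U i) ∧ ∀ p ∈ U i, s p 0 = p.1 ∧ s p 1 = p.2

/-- Topological complexity (non-reduced, possibly infinite). -/
noncomputable def TC : ℕ∞ := minCover (TCcover Y)

/-- `Y` can be covered by `k` open sets, each of which can be deformed within `Y`
to a point. -/
def catCover (k : ℕ) : Prop :=
  ∃ U : Fin k → Set Y,
    (∀ i, IsOpen (U i)) ∧ (⋃ i, U i) = univ ∧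
    ∀ i, ∃ H : Y × I → Y,
      ContinuousOn H (U i ×ˢ (univ : Set I)) ∧ (∀ x ∈ U i, H (x, 0) = x) ∧
      ∃ y₀, ∀ x ∈ U i, H (x, 1) = y₀

/-- Non-reduced Lusternik–Schnirelmann category. -/
noncomputable def cat : ℕ∞ := minCover (catCover Y)

end Plain

section Equivariant

variable [TopologicalSpace X] (act : G → X → X)

/-- `X × X` can be covered by `k` invariant open sets each admitting an
equivariant motion planner. -/
def eqTCcover (k : ℕ) : Prop :=
  ∃ U : Fin k → Set (X × X),
    (∀ i, IsOpen (U i)) ∧ (⋃ i, U i) = univ ∧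
    ∀ i, (∀ g p, p ∈ U i → (act g p.1, act g p.2) ∈ U i) ∧
      ∃ s : X × X → C(I, X),
        ContinuousOn s (U i) ∧
        (∀ p ∈ U i, s p 0 = p.1 ∧ s p 1 = p.2) ∧
        (∀ g p, p ∈ U i → ∀ t : I, s (act g p.1, act g p.2) t = act g (s p t))

/-- Equivariant topological complexity `TC_G` of Colman and Grant. -/
noncomputable def eqTC : ℕ∞ := minCover (eqTCcover act)

/-- `X × X` can be covered by `k` `(G × G)`-invariant open sets, each admitting a
`(G × G)`-equivariant section of `π^G : P X ×_{X/G} P X → X × X`; such a section is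
recorded by a pair of paths `s₁ p`, `s₂ p`, with the orbit of the endpoint of the first
equal to the orbit of the starting point of the second. -/
def invTCcover (k : ℕ) : Prop :=
  ∃ U : Fin k → Set (X × X),
    (∀ i, IsOpen (U i)) ∧ (⋃ i, U i) = univ ∧
    ∀ i, (∀ g₁ g₂ : G, ∀ p, p ∈ U i → (act g₁ p.1, act g₂ p.2) ∈ U i) ∧
      ∃ s₁ s₂ : X × X → C(I, X),
        ContinuousOn s₁ (U i) ∧ ContinuousOn s₂ (U i) ∧
        (∀ p ∈ U i, s₁ p 0 = p.1 ∧ s₂ p 1 = p.2 ∧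
          orbit act (s₁ p 1) = orbit act (s₂ p 0)) ∧
        (∀ g₁ g₂ : G, ∀ p, p ∈ U i → ∀ t : I,
          s₁ (act g₁ p.1, act g₂ p.2) t = act g₁ (s₁ p t) ∧
          s₂ (act g₁ p.1, act g₂ p.2) t = act g₂ (s₂ p t))

/-- Invariant topological complexity `TC^G` of Lubawski and Marzantowicz. -/
noncomputable def invTC : ℕ∞ := minCover (invTCcover act)

/-- The invariant open set `U` is `G`-compressible into `A`: the inclusion `U ↪ X` is
`G`-equivariantly homotopic to a `G`-map with values in `A`. -/
def GCompressible (A : Set X) (U : Set X) : Prop :=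
  (∀ g x, x ∈ U → act g x ∈ U) ∧
  ∃ H : X × I → X,
    ContinuousOn H (U ×ˢ (univ : Set I)) ∧ (∀ x ∈ U, H (x, 0) = x) ∧
    (∀ g x, x ∈ U → ∀ t : I, H (act g x, t) = act g (H (x, t))) ∧
    (∀ x ∈ U, H (x, 1) ∈ A)

/-- A `G`-categorical set: compressible into a single orbit. -/
def GCategorical (U : Set X) : Prop :=
  ∃ x₀ : X, GCompressible act (orbit act x₀) U

/-- `X` can be covered by `k` open `G`-categorical sets. -/
def catGCover (k : ℕ) : Prop :=
  ∃ U : Fin k → Set X,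
    (∀ i, IsOpen (U i)) ∧ (⋃ i, U i) = univ ∧ ∀ i, GCategorical act (U i)

/-- Equivariant Lusternik–Schnirelmann category `cat_G`. -/
noncomputable def catG : ℕ∞ := minCover (catGCover act)

/-- `X` can be covered by `k` open sets `G`-compressible into `{star}`. -/
def pointedCatGCover (star : X) (k : ℕ) : Prop :=
  ∃ U : Fin k → Set X,
    (∀ i, IsOpen (U i)) ∧ (⋃ i, U i) = univ ∧
    ∀ i, GCompressible act {star} (U i)

/-- The pointed equivariant category `_{{⋆}}cat_G(X)`. -/
noncomputable def pointedCatG (star : X) : ℕ∞ := minCover (pointedCatGCover act star)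

/-- `X` is `G`-contractible: the identity is `G`-homotopic to a map with values in a
single orbit. -/
def GContractible : Prop :=
  ∃ H : X × I → X,
    Continuous H ∧ (∀ x, H (x, 0) = x) ∧
    (∀ g x, ∀ t : I, H (act g x, t) = act g (H (x, t))) ∧
    ∃ x₀ : X, ∀ x, H (x, 1) ∈ orbit act x₀

end Equivariant

/-- The orbit space `X/G` with the quotient topology. -/
abbrev OrbitSpace (act : G → X → X) : Type _ := Quot (fun x y => ∃ g, act g x = y)

end PaperTC
namespace PaperTC

/-- The unit sphere `S^n ⊆ ℝ^{n+1}` (with the Euclidean metric). -/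
abbrev Sph (n : ℕ) : Set (EuclideanSpace ℝ (Fin (n + 1))) := Metric.sphere 0 1

/-- The action of `G` on the unit sphere `S^n` obtained by restricting an orthogonal
representation of `G` on `ℝ^{n+1}`. -/
noncomputable def sphereAct {G : Type*} [Monoid G] {n : ℕ}
    (ρ : G →* (EuclideanSpace ℝ (Fin (n + 1)) ≃ₗᵢ[ℝ] EuclideanSpace ℝ (Fin (n + 1)))) :
    G → ↥(Sph n) → ↥(Sph n) := fun g x =>
  ⟨ρ g x, mem_sphere_zero_iff_norm.mpr (by
    rw [(ρ g).norm_map]; exact mem_sphere_zero_iff_norm.mp x.2)⟩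

end PaperTC

open PaperTC

/-
The lower bounds come from degrees of pairs of maps `S × S → S`, where `S` is the unit sphere of
`ℝᵈ`. The degree `D(f, g)` of `(f, g) : S × S → S × S` is an integral of the Jacobian determinant of
the norm-preserving extension of `(f, g)`; it is homotopy invariant because `∫ det Dh = 0` for
every compactly supported `C¹` map `h`. A motion planner on `Uᵢ` provides a map `fᵢ` homotopic to
the first projection `a` and equal to the second projection `b` over `Uᵢ`. If `U₀` and `U₁` cover
`S × S`, then locally `f₀` or `f₁` equals `b`, so `D(f₀, f₁) + D(b, b) = D(f₀, b) + D(b, f₁)`. Since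
`D(f, f) = 0` for all `f` when `d ≥ 2`, homotopy invariance turns this into
`D(a, b) + D(b, a) = 0`, which forces `d` to be even because the swap of the two factors of
`ℝᵈ × ℝᵈ` has determinant `(-1)ᵈ`; for `d = 1` the sphere is disconnected. Equivariant planners
restrict to planners on the fixed sphere, hence `n + 1` and `k + 1` are both even.

Conversely, let `T` be the action of a generator. Then `T - T⁻¹` is skew-adjoint with kernel
`E₁ ⊕ E₋₁`, and skew-adjoint maps have even rank, so both eigenspaces are even-dimensional. Adding
skew-adjoint maps with ranges `E₁` and `E₋₁` gives an injective skew-adjoint `J` which commutes with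
the action. Off the antipodal pairs, a planner follows the segment from `x` to `y`; off the
diagonal, it moves from `x` to `-x` through `J x` and then follows the segment to `y`.
-/

namespace PaperTC

open MeasureTheory Topology Filter NormedSpace Metric

section NullLagrangian

lemma exists_weights_eval_eq_sum {F : Type*} [Field F] (N : ℕ) {v : ℕ → F}
    (hv : Function.Injective v) (a : F) :
    ∃ w : ℕ → F, ∀ q : Polynomial F, q.natDegree ≤ N →
      q.eval a = ∑ i ∈ Finset.range (N + 1), w i * q.eval (v i) := by
  refine ⟨fun i ↦ (Lagrange.basis (Finset.range (N + 1)) v i).eval a, fun q hq ↦ ?_⟩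
  have hdeg : q.degree < (Finset.range (N + 1)).card := by
    rw [Finset.card_range]
    exact Polynomial.degree_le_natDegree.trans_lt (by exact_mod_cast Nat.lt_succ_of_le hq)
  conv_lhs => rw [Lagrange.eq_interpolate hv.injOn hdeg, Lagrange.interpolate_apply,
    Polynomial.eval_finsetSum]
  simp only [Polynomial.eval_mul, Polynomial.eval_C, mul_comm]

variable {W : Type*} [NormedAddCommGroup W] [NormedSpace ℝ W]

lemma bijective_add_of_lipschitzWith [CompleteSpace W] {g : W → W} {c : NNReal} (hc : c < 1)
    (hg : LipschitzWith c g) : Function.Bijective fun x ↦ x + g x := by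
  have happrox : ApproximatesLinearOn (fun x ↦ x + g x)
      (ContinuousLinearEquiv.refl ℝ W : W →L[ℝ] W) univ c := by
    rw [ApproximatesLinearOn.approximatesLinearOn_iff_lipschitzOnWith, lipschitzOnWith_univ]
    convert hg using 1
    ext x
    simp
  have hc' : Subsingleton W ∨
      c < ‖((ContinuousLinearEquiv.refl ℝ W).symm : W →L[ℝ] W)‖₊⁻¹ := by
    rcases subsingleton_or_nontrivial W with hW | hW
    · exact Or.inl hW
    · refine Or.inr ?_
      rwa [ContinuousLinearEquiv.refl_symm, ContinuousLinearEquiv.coe_refl,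
        ContinuousLinearMap.nnnorm_id, inv_one]
  exact ⟨injOn_univ.1 (happrox.injOn hc'), happrox.surjective hc'⟩

variable [FiniteDimensional ℝ W]

lemma det_id_add_pos {A : W →L[ℝ] W} (hA : ‖A‖ < 1) :
    0 < (ContinuousLinearMap.id ℝ W + A).det := by
  have : CompleteSpace W := FiniteDimensional.complete ℝ W
  have hne : ∀ t ∈ Icc (0 : ℝ) 1, (ContinuousLinearMap.id ℝ W + t • A).det ≠ 0 := by
    intro t ht
    have hunit : IsUnit (1 - -(t • A)) := by
      refine isUnit_one_sub_of_norm_lt_one ?_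
      rw [norm_neg, norm_smul, Real.norm_of_nonneg ht.1]
      exact (mul_le_of_le_one_left (norm_nonneg A) ht.2).trans_lt hA
    rw [sub_neg_eq_add] at hunit
    exact (LinearMap.isUnit_det _ (hunit.map ContinuousLinearMap.toLinearMapRingHom)).ne_zero
  have hcont : Continuous fun t : ℝ ↦ (ContinuousLinearMap.id ℝ W + t • A).det :=
    ContinuousLinearMap.continuous_det.comp (by fun_prop)
  by_contra! hdet
  obtain ⟨t, ht, hzero⟩ := intermediate_value_Icc' zero_le_one hcont.continuousOn
    (show (0 : ℝ) ∈ Icc _ _ by simpa [ContinuousLinearMap.det] using hdet)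
  exact hne t ht hzero

variable [MeasurableSpace W] [BorelSpace W] (μ : Measure W) [μ.IsAddHaarMeasure]
  {B : Set W} {h : W → W} {K : NNReal}

lemma setIntegral_det_id_add_fderiv (hB : MeasurableSet B) (hh : Differentiable ℝ h)
    (hK : LipschitzWith K h) (hK1 : K < 1) (hhB : ∀ x ∉ B, h x = 0) :
    ∫ x in B, (ContinuousLinearMap.id ℝ W + fderiv ℝ h x).det ∂μ = μ.real B := by
  have : CompleteSpace W := FiniteDimensional.complete ℝ W
  have hbij := bijective_add_of_lipschitzWith hK1 hK
  have himage : (fun x ↦ x + h x) '' B = B := by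
    have hfix : EqOn (fun x ↦ x + h x) id Bᶜ := fun x hx ↦ by simp [hhB x hx]
    rw [← compl_inj_iff, ← image_compl_eq hbij, hfix.image_eq_self]
  have hpos (x : W) : 0 < (ContinuousLinearMap.id ℝ W + fderiv ℝ h x).det :=
    det_id_add_pos ((norm_fderiv_le_of_lipschitz ℝ hK).trans_lt hK1)
  have hchange := integral_image_eq_integral_abs_det_fderiv_smul μ hB
    (fun x _ ↦ ((hasFDerivAt_id x).add (hh x).hasFDerivAt).hasFDerivWithinAt)
    hbij.1.injOn fun _ ↦ (1 : ℝ)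
  simpa [himage, abs_of_pos (hpos _)] using hchange.symm

lemma setIntegral_det_smul_id_add_fderiv (hB : MeasurableSet B) (hh : Differentiable ℝ h)
    (hK : LipschitzWith K h) (hhB : ∀ x ∉ B, h x = 0) {s : ℝ} (hs : K < s) :
    ∫ x in B, (s • ContinuousLinearMap.id ℝ W + fderiv ℝ h x).det ∂μ
      = s ^ Module.finrank ℝ W * μ.real B := by
  have hs0 : 0 < s := K.2.trans_lt hs
  have hK1 : ‖s⁻¹‖₊ * K < 1 := by
    rw [← NNReal.coe_lt_coe, NNReal.coe_mul, coe_nnnorm, norm_inv, Real.norm_of_nonneg hs0.le,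
      inv_mul_lt_iff₀ hs0]
    simpa using hs
  have hdet (x : W) : (s • ContinuousLinearMap.id ℝ W + fderiv ℝ h x).det
      = s ^ Module.finrank ℝ W *
        (ContinuousLinearMap.id ℝ W + fderiv ℝ (s⁻¹ • h) x).det := by
    rw [fderiv_const_smul (hh x), ContinuousLinearMap.det, ContinuousLinearMap.det,
      ← LinearMap.det_smul, ← ContinuousLinearMap.toLinearMap_smul, smul_add,
      smul_inv_smul₀ hs0.ne']
  simp only [hdet]
  rw [integral_const_mul, setIntegral_det_id_add_fderiv μ hB (hh.const_smul s⁻¹)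
    ((lipschitzWith_smul s⁻¹).comp hK) hK1 fun x hx ↦ by simp [hhB x hx]]

-- Both sides of `setIntegral_det_smul_id_add_fderiv` are polynomials in `s` that agree for large
-- `s`, hence they agree at `s = 0`.
lemma integral_det_fderiv_eq_zero [Nontrivial W] (hh : ContDiff ℝ 1 h)
    (hsupp : HasCompactSupport h) : ∫ x, (fderiv ℝ h x).det ∂μ = 0 := by
  obtain ⟨K, hK⟩ := hh.lipschitzWith_of_hasCompactSupport hsupp (by simp)
  set N := Module.finrank ℝ W
  have hN0 : N ≠ 0 := Module.finrank_pos.ne'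
  obtain ⟨w, hw⟩ := exists_weights_eval_eq_sum N
    (v := fun i : ℕ ↦ (K + 1 + i : ℝ)) (fun i j hij ↦ by simpa using hij) 0
  have hcombo (x : W) : (fderiv ℝ h x).det = ∑ i ∈ Finset.range (N + 1),
      w i * ((K + 1 + i : ℝ) • ContinuousLinearMap.id ℝ W + fderiv ℝ h x).det := by
    have hq := hw (LinearMap.charpoly (-(fderiv ℝ h x : W →ₗ[ℝ] W)))
      (LinearMap.charpoly_natDegree _).le
    simp only [LinearMap.eval_charpoly, sub_neg_eq_add, map_zero, zero_add] at hq
    rw [ContinuousLinearMap.det, hq]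
    refine Finset.sum_congr rfl fun i _ ↦ ?_
    rw [Algebra.algebraMap_eq_smul_one, ContinuousLinearMap.det]
    rfl
  have hint (i : ℕ) : IntegrableOn (fun x ↦
      ((K + 1 + i : ℝ) • ContinuousLinearMap.id ℝ W + fderiv ℝ h x).det) (tsupport h) μ := by
    refine (ContinuousLinearMap.continuous_det.comp ?_).continuousOn.integrableOn_compact hsupp
    exact continuous_const.add (hh.continuous_fderiv one_ne_zero)
  have hzero (x : W) (hx : x ∉ tsupport h) : (fderiv ℝ h x).det = 0 := by
    rw [image_eq_zero_of_notMem_tsupport fun h' ↦ hx (tsupport_fderiv_subset ℝ h' : _)]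
    simp [ContinuousLinearMap.det]
  have hpow : (0 : ℝ) ^ N = ∑ i ∈ Finset.range (N + 1), w i * (K + 1 + i : ℝ) ^ N := by
    simpa using hw (Polynomial.X ^ N) (by simp)
  calc ∫ x, (fderiv ℝ h x).det ∂μ
      = ∫ x in tsupport h, (fderiv ℝ h x).det ∂μ :=
        (setIntegral_eq_integral_of_forall_compl_eq_zero hzero).symm
    _ = ∑ i ∈ Finset.range (N + 1), w i * ((K + 1 + i : ℝ) ^ N * μ.real (tsupport h)) := by
        simp only [hcombo]
        rw [integral_finsetSum _ fun i _ ↦ (hint i).const_mul (w i)]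
        refine Finset.sum_congr rfl fun i _ ↦ ?_
        rw [integral_const_mul, setIntegral_det_smul_id_add_fderiv μ
          (isClosed_tsupport h).measurableSet (hh.differentiable one_ne_zero) hK
          (fun x ↦ image_eq_zero_of_notMem_tsupport) (by linarith [i.cast_nonneg (α := ℝ)])]
    _ = 0 := by
        simp only [← mul_assoc]
        rw [← Finset.sum_mul, ← hpow, zero_pow hN0, zero_mul]

end NullLagrangian

section HomotopyInvariance

lemma exists_integral_deriv_mul_eq_sub :
    ∃ l : ℝ → ℝ, ContDiff ℝ 1 l ∧ HasCompactSupport l ∧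
      ∀ J : ℝ → ℝ, (∀ t ≤ 0, J t = J 0) → (∀ t ≥ 1, J t = J 1) →
        ∫ t, deriv l t * J t = J 0 - J 1 := by
  let l : ContDiffBump (2⁻¹ : ℝ) := ⟨2⁻¹, 1, by norm_num, by norm_num⟩
  have hl : ContDiff ℝ 1 l := l.contDiff
  have hone {t : ℝ} (h0 : 0 ≤ t) (h1 : t ≤ 1) : l t = 1 := by
    refine l.one_of_mem_closedBall ?_
    rw [Metric.mem_closedBall, Real.dist_eq, abs_le]
    constructor <;> linarith
  have hderiv {t : ℝ} (h0 : 0 ≤ t) (h1 : t ≤ 1) : deriv l t = 0 := by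
    refine IsLocalMax.deriv_eq_zero (Eventually.of_forall fun s ↦ ?_)
    rw [hone h0 h1]
    exact l.le_one
  refine ⟨l, hl, l.hasCompactSupport, fun J hJ0 hJ1 ↦ ?_⟩
  have hleft : EqOn (fun t ↦ deriv l t * J 0) (fun t ↦ deriv l t * J t) (Iic 1) := by
    intro t ht
    rcases le_total t 0 with h | h
    · simp only [hJ0 t h]
    · simp only [hderiv h ht, zero_mul]
  have hright : EqOn (fun t ↦ deriv l t * J 1) (fun t ↦ deriv l t * J t) (Ioi 1) :=
    fun t (ht : 1 < t) ↦ by simp only [hJ1 t ht.le]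
  have hint : Integrable (deriv l) :=
    (hl.continuous_deriv le_rfl).integrable_of_hasCompactSupport l.hasCompactSupport.deriv
  rw [← intervalIntegral.integral_Iic_add_Ioi
      ((hint.mul_const _).integrableOn.congr_fun hleft measurableSet_Iic)
      ((hint.mul_const _).integrableOn.congr_fun hright measurableSet_Ioi),
    ← setIntegral_congr_fun measurableSet_Iic hleft,
    ← setIntegral_congr_fun measurableSet_Ioi hright, integral_mul_const, integral_mul_const,
    l.hasCompactSupport.integral_Iic_deriv_eq hl, l.hasCompactSupport.integral_Ioi_deriv_eq hl,
    hone zero_le_one le_rfl]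
  ring

lemma det_smul_fst_add_prod {F M : Type*} [Field F] [AddCommGroup M] [Module F M]
    [FiniteDimensional F M] (c : F) (l : M →ₗ[F] F) (L : F × M →ₗ[F] M) :
    LinearMap.det ((c • LinearMap.fst F F M + l ∘ₗ L).prod L)
      = c * LinearMap.det (L ∘ₗ LinearMap.inr F F M) := by
  have hfactor : (c • LinearMap.fst F F M + l ∘ₗ L).prod L =
      LinearMap.transvection (l ∘ₗ LinearMap.snd F F M) ((1 : F), (0 : M)) ∘ₗ
      (LinearMap.prodMap (c • LinearMap.id) LinearMap.id) ∘ₗ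
      LinearMap.transvection (LinearMap.fst F F M) ((0 : F), L (1, 0)) ∘ₗ
      (LinearMap.prodMap LinearMap.id (L ∘ₗ LinearMap.inr F F M)) := by
    ext <;> simp [LinearMap.transvection, Prod.mk_zero_zero]
  rw [hfactor]
  simp [LinearMap.det_comp, LinearMap.transvection.det, LinearMap.det_prodMap]

lemma exists_contDiff_hasCompactSupport_eventuallyEq {V F : Type*} [NormedAddCommGroup V]
    [NormedSpace ℝ V] [FiniteDimensional ℝ V] [NormedAddCommGroup F] [NormedSpace ℝ F]
    {n : ℕ∞} {f : V → F} {O K : Set V} (hO : IsOpen O) (hf : ContDiffOn ℝ n f O)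
    (hK : IsCompact K) (hKO : K ⊆ O) :
    ∃ g : V → F, ContDiff ℝ n g ∧ HasCompactSupport g ∧ ∀ x ∈ K, g =ᶠ[𝓝 x] f := by
  obtain ⟨U, hU, hKU, hUO, hUc⟩ := exists_open_between_and_isCompact_closure hK hO hKO
  obtain ⟨χ, hχ0, hχ1, -⟩ := exists_contMDiffMap_zero_one_nhds_of_isClosed
    (modelWithCornersSelf ℝ V) (n := n) hU.isClosed_compl hK.isClosed
    (disjoint_compl_left_iff_subset.2 hKU)
  have hsupp : tsupport χ ⊆ closure U :=
    closure_mono fun x hx ↦ by_contra fun hxU ↦ hx (hχ0.self_of_nhdsSet x hxU)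
  have hcompact : HasCompactSupport χ := hUc.of_isClosed_subset (isClosed_tsupport _) hsupp
  refine ⟨fun x ↦ χ x • f x, contDiff_iff_contDiffAt.2 fun x ↦ ?_, hcompact.smul_right,
    fun x hx ↦ ?_⟩
  · by_cases hx : x ∈ tsupport χ
    · exact χ.contMDiff.contDiff.contDiffAt.smul (hf.contDiffAt (hO.mem_nhds (hUO (hsupp hx))))
    · refine contDiffAt_const (c := 0) |>.congr_of_eventuallyEq ?_
      filter_upwards [notMem_tsupport_iff_eventuallyEq.1 hx] with y hy
      simp [hy]
  · filter_upwards [eventually_nhdsSet_iff_forall.1 hχ1 x hx] with y hy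
    rw [hy, one_smul]

variable {W : Type*} [NormedAddCommGroup W] [NormedSpace ℝ W] [FiniteDimensional ℝ W]

lemma det_fderiv_mul_comp_prodMk {l : ℝ → ℝ} {Ψ : W → ℝ} {Φ : ℝ × W → W} {z : ℝ × W}
    (hl : DifferentiableAt ℝ l z.1) (hΨ : DifferentiableAt ℝ Ψ (Φ z))
    (hΦ : DifferentiableAt ℝ Φ z) :
    (fderiv ℝ (fun y ↦ (l y.1 * Ψ (Φ y), Φ y)) z).det
      = deriv l z.1 * (Ψ (Φ z) * (fderiv ℝ (fun w ↦ Φ (z.1, w)) z.2).det) := by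
  have hfst : HasFDerivAt (fun y : ℝ × W ↦ l y.1 * Ψ (Φ y))
      ((deriv l z.1 * Ψ (Φ z)) • ContinuousLinearMap.fst ℝ ℝ W +
        (l z.1 • fderiv ℝ Ψ (Φ z)).comp (fderiv ℝ Φ z)) z := by
    refine ((hl.hasDerivAt.comp_hasFDerivAt z hasFDerivAt_fst).mul
      (hΨ.hasFDerivAt.comp z hΦ.hasFDerivAt)).congr_fderiv ?_
    ext <;> simp [mul_comm, add_comm]
  have hslice : HasFDerivAt (fun w ↦ Φ (z.1, w))
      ((fderiv ℝ Φ z).comp (ContinuousLinearMap.inr ℝ ℝ W)) z.2 :=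
    HasFDerivAt.comp z.2 (by exact hΦ.hasFDerivAt) (hasFDerivAt_prodMk_right z.1 z.2)
  rw [(hfst.prodMk hΦ.hasFDerivAt).fderiv, hslice.fderiv, ← mul_assoc]
  exact det_smul_fst_add_prod _ ((l z.1 • fderiv ℝ Ψ (Φ z) : W →L[ℝ] ℝ) : W →ₗ[ℝ] ℝ)
    (fderiv ℝ Φ z : ℝ × W →ₗ[ℝ] W)

variable {Ω : Set W} {Φ : ℝ × W → W} {l : ℝ → ℝ} {ψ Ψ : W → ℝ}

lemma exists_det_fderiv_eq_deriv_mul (hl : ContDiff ℝ 1 l) (hlc : HasCompactSupport l)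
    (hΩ : IsOpen Ω) (hΦ : ContDiffOn ℝ 1 Φ (univ ×ˢ Ω)) (hψ : ContDiff ℝ 1 ψ)
    (hψc : HasCompactSupport ψ) (hψΩ : tsupport ψ ⊆ Ω) (hΨ : Differentiable ℝ Ψ)
    (hfactor : ∀ t, ∀ w ∈ Ω, ψ w = Ψ (Φ (t, w))) :
    ∃ h : ℝ × W → ℝ × W, ContDiff ℝ 1 h ∧ HasCompactSupport h ∧ ∀ z, (fderiv ℝ h z).det
      = deriv l z.1 * (ψ z.2 * (fderiv ℝ (fun w ↦ Φ (z.1, w)) z.2).det) := by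
  have hK : IsCompact (tsupport l ×ˢ tsupport ψ) := hlc.prod hψc
  have hO : IsOpen ((univ : Set ℝ) ×ˢ Ω) := isOpen_univ.prod hΩ
  have hKO : tsupport l ×ˢ tsupport ψ ⊆ univ ×ˢ Ω := prod_mono (subset_univ _) hψΩ
  have hmul {z : ℝ × W} (hz : z ∉ tsupport l ×ˢ tsupport ψ) : l z.1 * ψ z.2 = 0 :=
    mul_eq_zero.2 <| (not_and_or.1 hz).imp image_eq_zero_of_notMem_tsupport
      image_eq_zero_of_notMem_tsupport
  obtain ⟨g, hg, hgc, hgΦ⟩ := exists_contDiff_hasCompactSupport_eventuallyEq hO hΦ hK hKO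
  refine ⟨fun z ↦ (l z.1 * ψ z.2, g z),
    ((hl.comp contDiff_fst).mul (hψ.comp contDiff_snd)).prodMk hg,
    HasCompactSupport.intro (hK.union hgc) fun z hz ↦ ?_, fun z ↦ ?_⟩
  · rw [mem_union, not_or] at hz
    simp [hmul hz.1, image_eq_zero_of_notMem_tsupport hz.2]
  by_cases hz : z ∈ tsupport l ×ˢ tsupport ψ
  · have hnear : (fun z ↦ (l z.1 * ψ z.2, g z)) =ᶠ[𝓝 z] fun y ↦ (l y.1 * Ψ (Φ y), Φ y) := by
      filter_upwards [hgΦ z hz, hO.mem_nhds (hKO hz)] with y hy hyO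
      simp only [hy, hfactor y.1 y.2 hyO.2]
    rw [hnear.fderiv_eq, hfactor z.1 z.2 (hKO hz).2]
    exact det_fderiv_mul_comp_prodMk (hl.differentiable one_ne_zero _) (hΨ _)
      ((hΦ.contDiffAt (hO.mem_nhds (hKO hz))).differentiableAt one_ne_zero)
  · have hnear : (fun z ↦ (l z.1 * ψ z.2, g z)) =ᶠ[𝓝 z]
        fun y ↦ ((fun _ ↦ (0 : ℝ)) y.1 * (fun _ ↦ (0 : ℝ)) (g y), g y) := by
      filter_upwards [hK.isClosed.isOpen_compl.mem_nhds hz] with y hy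
      simp [hmul hy]
    have hzero : deriv l z.1 * ψ z.2 = 0 := mul_eq_zero.2 <| (not_and_or.1 hz).imp
      (fun hz₁ ↦ image_eq_zero_of_notMem_tsupport fun h' ↦ hz₁ (tsupport_deriv_subset h'))
      image_eq_zero_of_notMem_tsupport
    rw [hnear.fderiv_eq, det_fderiv_mul_comp_prodMk (differentiableAt_const _)
      (differentiableAt_const _) (hg.differentiable one_ne_zero z), ← mul_assoc, ← mul_assoc, hzero]
    simp

variable [MeasurableSpace W] [BorelSpace W] (μ : Measure W) [μ.IsAddHaarMeasure]

lemma integral_deriv_mul_setIntegral_det_fderiv_eq_zero (hl : ContDiff ℝ 1 l)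
    (hlc : HasCompactSupport l) (hΩ : IsOpen Ω) (hΦ : ContDiffOn ℝ 1 Φ (univ ×ˢ Ω))
    (hψ : ContDiff ℝ 1 ψ) (hψc : HasCompactSupport ψ) (hψΩ : tsupport ψ ⊆ Ω)
    (hΨ : Differentiable ℝ Ψ) (hfactor : ∀ t, ∀ w ∈ Ω, ψ w = Ψ (Φ (t, w))) :
    ∫ t, deriv l t * ∫ w in Ω, ψ w * (fderiv ℝ (fun w ↦ Φ (t, w)) w).det ∂μ = 0 := by
  obtain ⟨h, hh, hhc, hdet⟩ :=
    exists_det_fderiv_eq_deriv_mul hl hlc hΩ hΦ hψ hψc hψΩ hΨ hfactor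
  have hint : Integrable (fun z ↦ (fderiv ℝ h z).det) (volume.prod μ) := by
    refine (ContinuousLinearMap.continuous_det.comp
      (hh.continuous_fderiv one_ne_zero)).integrable_of_hasCompactSupport ?_
    exact (hhc.fderiv (𝕜 := ℝ)).comp_left (g := ContinuousLinearMap.det)
      (by simp [ContinuousLinearMap.det])
  have hset (t : ℝ) := setIntegral_eq_integral_of_forall_compl_eq_zero (μ := μ) (s := Ω)
    (f := fun w ↦ ψ w * (fderiv ℝ (fun w ↦ Φ (t, w)) w).det) fun w hw ↦ by
      rw [image_eq_zero_of_notMem_tsupport fun h' ↦ hw (hψΩ h'), zero_mul]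
  simp only [hset, ← integral_const_mul]
  rw [← integral_det_fderiv_eq_zero (volume.prod μ) hh hhc, integral_prod _ hint]
  simp only [hdet]

lemma setIntegral_mul_det_fderiv_eq_of_homotopy (hΩ : IsOpen Ω)
    (hΦ : ContDiffOn ℝ 1 Φ (univ ×ˢ Ω)) (hψ : ContDiff ℝ 1 ψ) (hψc : HasCompactSupport ψ)
    (hψΩ : tsupport ψ ⊆ Ω) (hΨ : Differentiable ℝ Ψ)
    (hfactor : ∀ t, ∀ w ∈ Ω, ψ w = Ψ (Φ (t, w)))
    (hΦ0 : ∀ t ≤ 0, ∀ w ∈ Ω, Φ (t, w) = Φ (0, w)) (hΦ1 : ∀ t ≥ 1, ∀ w ∈ Ω, Φ (t, w) = Φ (1, w)) :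
    ∫ w in Ω, ψ w * (fderiv ℝ (fun w ↦ Φ (0, w)) w).det ∂μ
      = ∫ w in Ω, ψ w * (fderiv ℝ (fun w ↦ Φ (1, w)) w).det ∂μ := by
  obtain ⟨l, hl, hlc, hstep⟩ := exists_integral_deriv_mul_eq_sub
  have hcongr {s t : ℝ} (hst : ∀ w ∈ Ω, Φ (s, w) = Φ (t, w)) :
      ∫ w in Ω, ψ w * (fderiv ℝ (fun w ↦ Φ (s, w)) w).det ∂μ
        = ∫ w in Ω, ψ w * (fderiv ℝ (fun w ↦ Φ (t, w)) w).det ∂μ := by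
    refine setIntegral_congr_fun hΩ.measurableSet fun w hw ↦ ?_
    have hnear : (fun w ↦ Φ (s, w)) =ᶠ[𝓝 w] fun w ↦ Φ (t, w) :=
      Filter.mem_of_superset (hΩ.mem_nhds hw) hst
    simp only [hnear.fderiv_eq]
  have hsub := hstep (fun t ↦ ∫ w in Ω, ψ w * (fderiv ℝ (fun w ↦ Φ (t, w)) w).det ∂μ)
    (fun t ht ↦ hcongr (hΦ0 t ht)) fun t ht ↦ hcongr (hΦ1 t ht)
  rw [integral_deriv_mul_setIntegral_det_fderiv_eq_zero μ hl hlc hΩ hΦ hψ hψc hψΩ hΨ hfactor]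
    at hsub
  exact sub_eq_zero.1 hsub.symm

end HomotopyInvariance

section Determinants

lemma det_comp_eq_zero_of_finrank_lt {F V M : Type*} [Field F] [AddCommGroup V] [Module F V]
    [FiniteDimensional F V] [AddCommGroup M] [Module F M] [FiniteDimensional F M]
    (A : V →ₗ[F] M) (B : M →ₗ[F] V) (h : Module.finrank F M < Module.finrank F V) :
    LinearMap.det (B ∘ₗ A) = 0 := by
  rw [LinearMap.det_eq_zero_iff_ker_ne_bot, ← bot_lt_iff_ne_bot]
  exact (bot_lt_iff_ne_bot.2 (LinearMap.ker_ne_bot_of_finrank_lt h)).trans_le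
    (LinearMap.ker_le_ker_comp A B)

lemma det_snd_prod_fst {F M : Type*} [Field F] [NeZero (2 : F)] [AddCommGroup M] [Module F M]
    [FiniteDimensional F M] :
    LinearMap.det ((LinearMap.snd F M M).prod (LinearMap.fst F M M))
      = (-1) ^ Module.finrank F M := by
  have h2 : (2 : F) ≠ 0 := two_ne_zero
  have hhalf (x : M) : (2 : F)⁻¹ • x + (2 : F)⁻¹ • x = x := by
    rw [← two_smul F, smul_inv_smul₀ h2]
  let d := (LinearMap.fst F M M + LinearMap.snd F M M).prod
    (LinearMap.fst F M M - LinearMap.snd F M M)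
  let e : (M × M) ≃ₗ[F] (M × M) := LinearEquiv.ofLinearMap d ((2 : F)⁻¹ • d)
    (by ext <;> simp [d, hhalf]) (by ext <;> simp [d, ← two_smul F, h2])
  have hconj : (e : M × M →ₗ[F] M × M) ∘ₗ (LinearMap.snd F M M).prod (LinearMap.fst F M M) ∘ₗ
      (e.symm : M × M →ₗ[F] M × M) = LinearMap.prodMap LinearMap.id ((-1 : F) • LinearMap.id) := by
    ext <;> simp [e, d, hhalf, sub_eq_add_neg, ← neg_add]
  rw [← LinearMap.det_conj _ e, hconj, LinearMap.det_prodMap, LinearMap.det_smul]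
  simp

lemma det_fderiv_smul_snd_prodMk_inv_smul_fst {V : Type*} [NormedAddCommGroup V]
    [NormedSpace ℝ V] [FiniteDimensional ℝ V] {r : V × V → ℝ} {w : V × V}
    (hr : DifferentiableAt ℝ r w) (hr0 : r w ≠ 0) :
    (fderiv ℝ (fun z ↦ (r z • z.2, (r z)⁻¹ • z.1)) w).det
      = (1 + (r w)⁻¹ * fderiv ℝ r w (-w.1, w.2)) * (-1) ^ Module.finrank ℝ V := by
  set dr : V × V →ₗ[ℝ] ℝ := (fderiv ℝ r w : V × V →ₗ[ℝ] ℝ) with hdr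
  have hfderiv : HasFDerivAt (fun z ↦ (r z • z.2, (r z)⁻¹ • z.1)) _ w :=
    (hr.hasFDerivAt.fun_smul hasFDerivAt_snd).prodMk
      (((hasDerivAt_inv hr0).comp_hasFDerivAt w hr.hasFDerivAt).fun_smul hasFDerivAt_fst)
  let swap := (LinearMap.snd ℝ V V).prod (LinearMap.fst ℝ V V)
  have hfactor : (fderiv ℝ (fun z ↦ (r z • z.2, (r z)⁻¹ • z.1)) w : V × V →ₗ[ℝ] V × V)
      = LinearMap.prodMap (r w • LinearMap.id) ((r w)⁻¹ • LinearMap.id) ∘ₗ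
        LinearMap.transvection ((r w)⁻¹ • dr ∘ₗ swap) (w.2, -w.1) ∘ₗ swap := by
    rw [hfderiv.fderiv]
    refine LinearMap.ext fun z ↦ Prod.ext ?_ ?_
    · simp [LinearMap.transvection, swap, hdr, smul_smul, hr0]
    · simp [LinearMap.transvection, swap, hdr, smul_smul, sq, mul_assoc]
  rw [ContinuousLinearMap.det, hfactor, LinearMap.det_comp, LinearMap.det_comp,
    LinearMap.transvection.det, LinearMap.det_prodMap, LinearMap.det_smul, LinearMap.det_smul,
    LinearMap.det_id, det_snd_prod_fst]
  simp [hr0, swap, hdr, ← mul_assoc]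

end Determinants

section PairDegree

variable {E : Type*} [NormedAddCommGroup E]

/-- The pairs of nonzero vectors. It retracts onto the product of unit spheres, and it is where
the pairs of maps having a `pairDegree` are defined. -/
def puncturedPairs (E : Type*) [NormedAddCommGroup E] : Set (E × E) := {w | w.1 ≠ 0 ∧ w.2 ≠ 0}

lemma isOpen_puncturedPairs : IsOpen (puncturedPairs E) :=
  (isOpen_ne_fun continuous_fst continuous_const).inter
    (isOpen_ne_fun continuous_snd continuous_const)

/-- A smooth function of the squared norm, with support in `[1, 5]`. -/
noncomputable def annularBump : ContDiffBump (3 : ℝ) := ⟨1, 2, one_pos, one_lt_two⟩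

/-- The weight in the integral defining `pairDegree`: a smooth function of the two norms, compactly
supported in `puncturedPairs E`. -/
noncomputable def pairWeight (w : E × E) : ℝ := annularBump (‖w.1‖ ^ 2) * annularBump (‖w.2‖ ^ 2)

lemma pairWeight_nonneg (w : E × E) : 0 ≤ pairWeight w :=
  mul_nonneg annularBump.nonneg annularBump.nonneg

lemma tsupport_pairWeight_subset :
    tsupport (pairWeight (E := E)) ⊆ {w | ‖w.1‖ ^ 2 ∈ Icc 1 5 ∧ ‖w.2‖ ^ 2 ∈ Icc 1 5} := by
  have hbump {s : ℝ} (hs : annularBump s ≠ 0) : s ∈ Icc 1 5 := by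
    have hmem : s ∈ Function.support annularBump := hs
    rw [annularBump.support_eq, Real.ball_eq_Ioo] at hmem
    norm_num [annularBump] at hmem
    exact ⟨hmem.1.le, hmem.2.le⟩
  refine closure_minimal (fun w hw ↦ ?_) ?_
  · exact ⟨hbump (left_ne_zero_of_mul hw), hbump (right_ne_zero_of_mul hw)⟩
  · exact (isClosed_Icc.preimage (by fun_prop)).inter (isClosed_Icc.preimage (by fun_prop))

lemma tsupport_pairWeight_subset_puncturedPairs :
    tsupport (pairWeight (E := E)) ⊆ puncturedPairs E := by
  intro w hw
  obtain ⟨h₁, h₂⟩ := tsupport_pairWeight_subset hw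
  constructor <;> intro h
  · norm_num [h] at h₁
  · norm_num [h] at h₂

lemma hasCompactSupport_pairWeight [ProperSpace E] :
    HasCompactSupport (pairWeight (E := E)) := by
  refine (isCompact_closedBall (0 : E × E) 3).of_isClosed_subset (isClosed_tsupport _) ?_
  intro w hw
  obtain ⟨h₁, h₂⟩ := tsupport_pairWeight_subset hw
  rw [mem_closedBall_zero_iff, Prod.norm_def]
  exact max_le (by nlinarith [h₁.2]) (by nlinarith [h₂.2])

variable [InnerProductSpace ℝ E]

lemma contDiff_pairWeight : ContDiff ℝ 1 (pairWeight (E := E)) :=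
  (annularBump.contDiff.comp (contDiff_fst.norm_sq ℝ)).mul
    (annularBump.contDiff.comp (contDiff_snd.norm_sq ℝ))

lemma contDiffOn_norm_fst : ContDiffOn ℝ 1 (fun w : E × E ↦ ‖w.1‖) (puncturedPairs E) :=
  contDiffOn_fst.norm ℝ fun _ hw ↦ hw.1

lemma contDiffOn_norm_snd : ContDiffOn ℝ 1 (fun w : E × E ↦ ‖w.2‖) (puncturedPairs E) :=
  contDiffOn_snd.norm ℝ fun _ hw ↦ hw.2

lemma contDiffOn_normalize_comp {V : Type*} [NormedAddCommGroup V] [NormedSpace ℝ V] {s : Set V}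
    {f : V → E} {n : WithTop ℕ∞} (hf : ContDiffOn ℝ n f s) (hf0 : ∀ x ∈ s, f x ≠ 0) :
    ContDiffOn ℝ n (fun x ↦ normalize (f x)) s :=
  ((hf.norm ℝ hf0).inv fun x hx ↦ norm_ne_zero_iff.2 (hf0 x hx)).smul hf

/-- A `C¹` map from pairs of nonzero vectors to unit vectors, that is, a representative of a map
from the product of two unit spheres to the unit sphere. -/
structure IsUnitMap (f : E × E → E) : Prop where
  contDiffOn : ContDiffOn ℝ 1 f (puncturedPairs E)
  norm_eq_one : ∀ w ∈ puncturedPairs E, ‖f w‖ = 1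

/-- The direction of the first vector; it represents the first projection of the product of two
spheres. -/
noncomputable def unitFst (w : E × E) : E := normalize w.1

/-- The direction of the second vector; it represents the second projection of the product of two
spheres. -/
noncomputable def unitSnd (w : E × E) : E := normalize w.2

lemma isUnitMap_unitFst : IsUnitMap (unitFst (E := E)) :=
  ⟨contDiffOn_normalize_comp contDiffOn_fst fun _ hw ↦ hw.1, fun _ hw ↦ norm_normalize hw.1⟩

lemma isUnitMap_unitSnd : IsUnitMap (unitSnd (E := E)) :=
  ⟨contDiffOn_normalize_comp contDiffOn_snd fun _ hw ↦ hw.2, fun _ hw ↦ norm_normalize hw.2⟩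

/-- The norm-preserving extension to pairs of vectors of the map `(f, g)` between products of
spheres. -/
noncomputable def radialPair (f g : E × E → E) (w : E × E) : E × E := (‖w.1‖ • f w, ‖w.2‖ • g w)

lemma pairWeight_radialPair {f g : E × E → E} {w : E × E} (hf : ‖f w‖ = 1) (hg : ‖g w‖ = 1) :
    pairWeight (radialPair f g w) = pairWeight w := by
  simp [pairWeight, radialPair, norm_smul, hf, hg]

lemma IsUnitMap.contDiffOn_radialPair {f g : E × E → E} (hf : IsUnitMap f) (hg : IsUnitMap g) :
    ContDiffOn ℝ 1 (radialPair f g) (puncturedPairs E) :=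
  (contDiffOn_norm_fst.smul hf.contDiffOn).prodMk (contDiffOn_norm_snd.smul hg.contDiffOn)

lemma radialPair_congr {f f' g g' : E × E → E} {w : E × E} (hf : f =ᶠ[𝓝 w] f')
    (hg : g =ᶠ[𝓝 w] g') : radialPair f g =ᶠ[𝓝 w] radialPair f' g' := by
  filter_upwards [hf, hg] with z hfz hgz
  simp only [radialPair, hfz, hgz]

lemma radialPair_unitFst_unitSnd : radialPair unitFst unitSnd = (id : E × E → E × E) := by
  ext w <;> simp [radialPair, unitFst, unitSnd]

lemma radialPair_unitSnd_unitFst : radialPair unitSnd unitFst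
    = fun w : E × E ↦ ((‖w.1‖ / ‖w.2‖) • w.2, (‖w.1‖ / ‖w.2‖)⁻¹ • w.1) := by
  ext w <;> simp [radialPair, unitFst, unitSnd, NormedSpace.normalize, smul_smul, div_eq_mul_inv]

lemma exists_hasFDerivAt_norm_div_norm {w : E × E} (hw : w ∈ puncturedPairs E) :
    ∃ dr : E × E →L[ℝ] ℝ, HasFDerivAt (fun w : E × E ↦ ‖w.1‖ / ‖w.2‖) dr w ∧
      dr (-w.1, w.2) = -2 * (‖w.1‖ / ‖w.2‖) := by
  have h₁ : DifferentiableAt ℝ (‖·‖) w.1 := differentiableAt_id.norm ℝ hw.1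
  have h₂ : DifferentiableAt ℝ (‖·‖) w.2 := differentiableAt_id.norm ℝ hw.2
  have hne : ‖w.2‖ ≠ 0 := norm_ne_zero_iff.2 hw.2
  have hinv := (hasDerivAt_inv hne).comp_hasFDerivAt w (h₂.hasFDerivAt.comp w hasFDerivAt_snd)
  refine ⟨_, (h₁.hasFDerivAt.comp w hasFDerivAt_fst).mul hinv, ?_⟩
  simp [h₁.fderiv_norm_self, h₂.fderiv_norm_self]
  field_simp
  ring

lemma det_fderiv_radialPair_unitSnd_unitFst [FiniteDimensional ℝ E] {w : E × E}
    (hw : w ∈ puncturedPairs E) :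
    (fderiv ℝ (radialPair unitSnd unitFst) w).det = (-1) ^ (Module.finrank ℝ E + 1) := by
  obtain ⟨dr, hr, hdr⟩ := exists_hasFDerivAt_norm_div_norm hw
  have hr0 : ‖w.1‖ / ‖w.2‖ ≠ 0 := div_ne_zero (norm_ne_zero_iff.2 hw.1) (norm_ne_zero_iff.2 hw.2)
  rw [radialPair_unitSnd_unitFst, det_fderiv_smul_snd_prodMk_inv_smul_fst hr.differentiableAt hr0,
    hr.fderiv, hdr, mul_left_comm, inv_mul_cancel₀ hr0]
  ring

variable [FiniteDimensional ℝ E]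

lemma IsUnitMap.det_fderiv_radialPair_self (hE : 2 ≤ Module.finrank ℝ E) {f : E × E → E}
    (hf : IsUnitMap f) {w : E × E} (hw : w ∈ puncturedPairs E) :
    (fderiv ℝ (radialPair f f) w).det = 0 := by
  let A (z : E × E) : E × ℝ := (‖z.1‖ • f z, ‖z.2‖)
  let B (z : E × ℝ) : E × E := (z.1, z.2 • normalize z.1)
  have hnear : radialPair f f =ᶠ[𝓝 w] B ∘ A := by
    filter_upwards [isOpen_puncturedPairs.mem_nhds hw] with z hz
    simp [radialPair, A, B, normalize_smul_of_pos (norm_pos_iff.2 hz.1),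
      normalize_eq_self_of_norm_eq_one (hf.norm_eq_one z hz)]
  have hA : DifferentiableAt ℝ A w := DifferentiableAt.prodMk
    ((differentiableAt_fst.norm ℝ hw.1).smul ((hf.contDiffOn.contDiffAt
      (isOpen_puncturedPairs.mem_nhds hw)).differentiableAt one_ne_zero))
    (differentiableAt_snd.norm ℝ hw.2)
  have hA0 : (A w).1 ≠ 0 := smul_ne_zero (norm_ne_zero_iff.2 hw.1)
    (norm_ne_zero_iff.1 (by rw [hf.norm_eq_one w hw]; exact one_ne_zero))
  have hB : DifferentiableAt ℝ B (A w) := differentiableAt_fst.prodMk <|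
    differentiableAt_snd.smul <| ((differentiableAt_fst.norm ℝ hA0).inv
      (norm_ne_zero_iff.2 hA0)).smul differentiableAt_fst
  rw [hnear.fderiv_eq, fderiv_comp _ hB hA]
  exact det_comp_eq_zero_of_finrank_lt (fderiv ℝ A w : E × E →ₗ[ℝ] E × ℝ)
    (fderiv ℝ B (A w) : E × ℝ →ₗ[ℝ] E × E) (by simp; omega)

variable [MeasurableSpace E] [BorelSpace E]

/-- The topological degree of the map `(f, g)` between products of spheres, up to the factor
`∫ w, pairWeight w`. -/
noncomputable def pairDegree (f g : E × E → E) : ℝ :=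
  ∫ w in puncturedPairs E, pairWeight w * (fderiv ℝ (radialPair f g) w).det

lemma setIntegral_pairWeight_pos [Nontrivial E] :
    0 < ∫ w in puncturedPairs E, pairWeight w := by
  obtain ⟨v, hv⟩ := exists_norm_eq E (Real.sqrt_nonneg 3)
  rw [setIntegral_eq_integral_of_forall_compl_eq_zero fun w hw ↦ image_eq_zero_of_notMem_tsupport
    fun h ↦ hw (tsupport_pairWeight_subset_puncturedPairs h)]
  refine contDiff_pairWeight.continuous.integral_pos_of_hasCompactSupport_nonneg_nonzero
    hasCompactSupport_pairWeight pairWeight_nonneg (x := (v, v)) ?_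
  have hone : annularBump 3 = 1 := annularBump.one_of_mem_closedBall (by simp [annularBump])
  simp [pairWeight, hv, hone]

lemma IsUnitMap.integrableOn_pairWeight_mul_det {f g : E × E → E} (hf : IsUnitMap f)
    (hg : IsUnitMap g) :
    IntegrableOn (fun w ↦ pairWeight w * (fderiv ℝ (radialPair f g) w).det) (puncturedPairs E) := by
  have hcont : Continuous fun w ↦ pairWeight w * (fderiv ℝ (radialPair f g) w).det := by
    refine continuous_of_tsupport fun w hw ↦ contDiff_pairWeight.continuous.continuousAt.mul <|
      ContinuousLinearMap.continuous_det.continuousAt.comp ?_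
    exact ((hf.contDiffOn_radialPair hg).continuousOn_fderiv_of_isOpen isOpen_puncturedPairs
      le_rfl).continuousAt <| isOpen_puncturedPairs.mem_nhds <|
        tsupport_pairWeight_subset_puncturedPairs (tsupport_mul_subset_left hw)
  exact (hcont.integrable_of_hasCompactSupport hasCompactSupport_pairWeight.mul_right).integrableOn

lemma pairDegree_congr {f f' g g' : E × E → E} (hf : EqOn f f' (puncturedPairs E))
    (hg : EqOn g g' (puncturedPairs E)) : pairDegree f g = pairDegree f' g' := by
  refine setIntegral_congr_fun isOpen_puncturedPairs.measurableSet fun w hw ↦ ?_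
  have hmem := isOpen_puncturedPairs.mem_nhds hw
  simp only [(radialPair_congr (hf.eventuallyEq_of_mem hmem)
    (hg.eventuallyEq_of_mem hmem)).fderiv_eq]

lemma pairDegree_unitFst_unitSnd :
    pairDegree (E := E) unitFst unitSnd = ∫ w in puncturedPairs E, pairWeight w := by
  simp [pairDegree, radialPair_unitFst_unitSnd, ContinuousLinearMap.det]

lemma pairDegree_unitSnd_unitFst :
    pairDegree (E := E) unitSnd unitFst
      = (-1) ^ (Module.finrank ℝ E + 1) * ∫ w in puncturedPairs E, pairWeight w := by
  rw [pairDegree, ← integral_const_mul]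
  refine setIntegral_congr_fun isOpen_puncturedPairs.measurableSet fun w hw ↦ ?_
  simp only [det_fderiv_radialPair_unitSnd_unitFst hw, mul_comm]

lemma IsUnitMap.pairDegree_self (hE : 2 ≤ Module.finrank ℝ E) {f : E × E → E}
    (hf : IsUnitMap f) : pairDegree f f = 0 :=
  setIntegral_eq_zero_of_forall_eq_zero fun w hw ↦ by
    rw [hf.det_fderiv_radialPair_self hE hw, mul_zero]

-- Near each point, one of `f` and `g` agrees with `h`, and then so do the sums of the integrands.
lemma pairDegree_add_pairDegree_self {f g h : E × E → E} (hf : IsUnitMap f) (hg : IsUnitMap g)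
    (hh : IsUnitMap h) (hfg : ∀ w ∈ puncturedPairs E, f =ᶠ[𝓝 w] h ∨ g =ᶠ[𝓝 w] h) :
    pairDegree f g + pairDegree h h = pairDegree f h + pairDegree h g := by
  simp only [pairDegree]
  rw [← integral_add (hf.integrableOn_pairWeight_mul_det hg)
      (hh.integrableOn_pairWeight_mul_det hh),
    ← integral_add (hf.integrableOn_pairWeight_mul_det hh)
      (hh.integrableOn_pairWeight_mul_det hg)]
  refine setIntegral_congr_fun isOpen_puncturedPairs.measurableSet fun w hw ↦ ?_
  rcases hfg w hw with hfh | hgh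
  · simp only [(radialPair_congr hfh (EventuallyEq.refl _ g)).fderiv_eq,
      (radialPair_congr hfh (EventuallyEq.refl _ h)).fderiv_eq, add_comm]
  · simp only [(radialPair_congr (EventuallyEq.refl _ f) hgh).fderiv_eq,
      (radialPair_congr (EventuallyEq.refl _ h) hgh).fderiv_eq]

lemma pairDegree_eq_of_homotopy {F G : ℝ → E × E → E}
    (hF : ContDiffOn ℝ 1 (fun q : ℝ × E × E ↦ F q.1 q.2) (univ ×ˢ puncturedPairs E))
    (hG : ContDiffOn ℝ 1 (fun q : ℝ × E × E ↦ G q.1 q.2) (univ ×ˢ puncturedPairs E))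
    (hF1 : ∀ t, ∀ w ∈ puncturedPairs E, ‖F t w‖ = 1)
    (hG1 : ∀ t, ∀ w ∈ puncturedPairs E, ‖G t w‖ = 1) :
    pairDegree (F 0) (G 0) = pairDegree (F 1) (G 1) := by
  have htime : ContDiffOn ℝ 1 (fun q : ℝ × E × E ↦ (Real.smoothTransition q.1, q.2))
      (univ ×ˢ puncturedPairs E) :=
    ((Real.smoothTransition.contDiff.comp contDiff_fst).prodMk contDiff_snd).contDiffOn
  have hmaps : MapsTo (fun q : ℝ × E × E ↦ (Real.smoothTransition q.1, q.2))
      (univ ×ˢ puncturedPairs E) (univ ×ˢ puncturedPairs E) := fun q hq ↦ ⟨mem_univ _, hq.2⟩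
  have hsnd : MapsTo (fun q : ℝ × E × E ↦ q.2) (univ ×ˢ puncturedPairs E) (puncturedPairs E) :=
    fun q hq ↦ hq.2
  have : (volume : Measure (E × E)).IsAddHaarMeasure := Measure.prod.instIsAddHaarMeasure _ _
  have hhomotopy := setIntegral_mul_det_fderiv_eq_of_homotopy (volume : Measure (E × E))
    (Φ := fun q ↦
      radialPair (F (Real.smoothTransition q.1)) (G (Real.smoothTransition q.1)) q.2)
    isOpen_puncturedPairs
    (((contDiffOn_norm_fst.comp contDiffOn_snd hsnd).smul (hF.comp htime hmaps)).prodMk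
      ((contDiffOn_norm_snd.comp contDiffOn_snd hsnd).smul (hG.comp htime hmaps)))
    contDiff_pairWeight hasCompactSupport_pairWeight tsupport_pairWeight_subset_puncturedPairs
    (contDiff_pairWeight.differentiable one_ne_zero)
    (fun t w hw ↦ (pairWeight_radialPair (hF1 _ w hw) (hG1 _ w hw)).symm)
    (fun t ht w _ ↦ by simp [Real.smoothTransition.zero_of_nonpos ht])
    (fun t ht w _ ↦ by simp [Real.smoothTransition.one_of_one_le ht])
  simpa [pairDegree] using hhomotopy

end PairDegree

section Representatives

lemma exists_contDiff_norm_sub_lt {X V F : Type*} [TopologicalSpace X] [NormedAddCommGroup V]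
    [NormedSpace ℝ V] [FiniteDimensional ℝ V] [NormedAddCommGroup F] [NormedSpace ℝ F]
    [FiniteDimensional ℝ F] {e : X → V} (he : IsClosedEmbedding e) (f : C(X, F)) {ε : ℝ}
    (hε : 0 < ε) : ∃ P : V → F, ContDiff ℝ 1 P ∧ ∀ x, ‖P (e x) - f x‖ < ε := by
  obtain ⟨g, rfl⟩ := f.exists_extension he
  obtain ⟨P, hP, hPg, -⟩ :=
    g.continuous.exists_contDiff_approx 1 (ε := fun _ ↦ ε) continuous_const fun _ ↦ hε
  exact ⟨P, hP, fun x ↦ by simpa [dist_eq_norm] using hPg (e x)⟩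

variable {E : Type*} [NormedAddCommGroup E]

lemma isClosedEmbedding_prodMap_sphere : IsClosedEmbedding
    (Prod.map Subtype.val Subtype.val : sphere (0 : E) 1 × sphere (0 : E) 1 → E × E) :=
  isClosed_sphere.isClosedEmbedding_subtypeVal.prodMap
    isClosed_sphere.isClosedEmbedding_subtypeVal

variable [InnerProductSpace ℝ E]

lemma inner_convexComb_pos {v w a : E} {t : ℝ} (ht : t ∈ Icc 0 1) (hv : 0 < inner ℝ v a)
    (hw : 0 < inner ℝ w a) : 0 < inner ℝ ((1 - t) • v + t • w) a := by
  have hconvex : Convex ℝ {v : E | 0 < innerₛₗ ℝ a v} :=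
    convex_halfSpace_gt (innerₛₗ ℝ a).isLinear 0
  have hmem := hconvex (x := v) (by simpa [real_inner_comm] using hv) (y := w)
    (by simpa [real_inner_comm] using hw) (sub_nonneg.2 ht.2) ht.1 (sub_add_cancel 1 t)
  simpa only [mem_ofPred_eq, innerₛₗ_apply_apply, real_inner_comm] using hmem

lemma ne_zero_of_inner_pos {v a : E} (h : 0 < inner ℝ v a) : v ≠ 0 := by
  rintro rfl
  simp at h

lemma inner_normalize_pos {v a : E} (h : 0 < inner ℝ v a) : 0 < inner ℝ (normalize v) a := by
  have hv : 0 < ‖v‖ := norm_pos_iff.2 (ne_zero_of_inner_pos h)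
  rw [NormedSpace.normalize, real_inner_smul_left]
  positivity

lemma inner_pos_of_norm_sub_lt_one {v a : E} (ha : ‖a‖ = 1) (h : ‖v - a‖ < 1) :
    0 < inner ℝ v a := by
  have hsplit : inner ℝ v a = inner ℝ (v - a) a + 1 := by
    rw [inner_sub_left, real_inner_self_eq_norm_sq, ha]
    ring
  have hcs := abs_real_inner_le_norm (v - a) a
  rw [ha, mul_one] at hcs
  linarith [neg_abs_le (inner ℝ (v - a) a)]

lemma isUnitMap_normalize {P : E × E → E} (hP : ContDiffOn ℝ 1 P (puncturedPairs E))
    (hP0 : ∀ w ∈ puncturedPairs E, P w ≠ 0) : IsUnitMap fun w ↦ normalize (P w) :=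
  ⟨contDiffOn_normalize_comp hP hP0, fun w hw ↦ norm_normalize (hP0 w hw)⟩

/-- The pair of directions of two nonzero vectors, in the product of unit spheres. -/
noncomputable def directions (w : puncturedPairs E) : sphere (0 : E) 1 × sphere (0 : E) 1 :=
  (⟨unitFst w, mem_sphere_zero_iff_norm.2 (isUnitMap_unitFst.norm_eq_one w.1 w.2)⟩,
    ⟨unitSnd w, mem_sphere_zero_iff_norm.2 (isUnitMap_unitSnd.norm_eq_one w.1 w.2)⟩)

lemma contDiffOn_unitFst_prodMk_unitSnd :
    ContDiffOn ℝ 1 (fun w : E × E ↦ (unitFst w, unitSnd w)) (puncturedPairs E) :=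
  isUnitMap_unitFst.contDiffOn.prodMk isUnitMap_unitSnd.contDiffOn

lemma continuous_directions : Continuous (directions (E := E)) :=
  (isUnitMap_unitFst.contDiffOn.continuousOn.domRestrict.subtype_mk _).prodMk
    (isUnitMap_unitSnd.contDiffOn.continuousOn.domRestrict.subtype_mk _)

/-- The unit map `F` represents the map `f` of spheres: at each pair of directions, the two values
are less than a right angle apart. Closeness suffices since only homotopy invariants of `f` are
read off `F`. -/
structure Represents (F : E × E → E)
    (f : sphere (0 : E) 1 × sphere (0 : E) 1 → sphere (0 : E) 1) : Prop extends IsUnitMap F where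
  inner_pos : ∀ w : puncturedPairs E, 0 < inner ℝ (F w) (f (directions w) : E)

lemma represents_unitFst : Represents (E := E) unitFst Prod.fst where
  toIsUnitMap := isUnitMap_unitFst
  inner_pos w := by simp [directions, isUnitMap_unitFst.norm_eq_one w.1 w.2]

lemma represents_unitSnd : Represents (E := E) unitSnd Prod.snd where
  toIsUnitMap := isUnitMap_unitSnd
  inner_pos w := by simp [directions, isUnitMap_unitSnd.norm_eq_one w.1 w.2]

variable [FiniteDimensional ℝ E]

lemma exists_represents_eq_unitSnd {f : sphere (0 : E) 1 × sphere (0 : E) 1 → sphere (0 : E) 1}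
    (hf : Continuous f) {A O : Set (sphere (0 : E) 1 × sphere (0 : E) 1)} (hA : IsClosed A)
    (hO : IsOpen O) (hAO : A ⊆ O) (hfO : ∀ q ∈ O, f q = q.2) :
    ∃ F, Represents F f ∧ ∀ w : puncturedPairs E, directions w ∈ A → F w = unitSnd (w : E × E) := by
  have he := isClosedEmbedding_prodMap_sphere (E := E)
  obtain ⟨P, hP, hPf⟩ := exists_contDiff_norm_sub_lt he ⟨_, continuous_subtype_val.comp hf⟩ one_pos
  obtain ⟨χ, hχO, hχA, hχ⟩ := exists_contMDiffMap_zero_one_of_isClosed (n := 1)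
    (modelWithCornersSelf ℝ (E × E)) (he.isClosedMap _ hO.isClosed_compl) (he.isClosedMap _ hA)
    ((disjoint_image_iff he.injective).2 (disjoint_compl_left_iff_subset.2 hAO))
  let u (w : E × E) : E × E := (unitFst w, unitSnd w)
  let G (w : E × E) : E := (1 - χ (u w)) • P (u w) + χ (u w) • unitSnd w
  have hG : ContDiffOn ℝ 1 G (puncturedPairs E) := by
    have hχu := χ.contMDiff.contDiff.comp_contDiffOn (contDiffOn_unitFst_prodMk_unitSnd (E := E))
    exact ((contDiffOn_const.sub hχu).smul
      (hP.comp_contDiffOn contDiffOn_unitFst_prodMk_unitSnd)).add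
        (hχu.smul isUnitMap_unitSnd.contDiffOn)
  have hpos (w : puncturedPairs E) : 0 < inner ℝ (G w) (f (directions w) : E) := by
    have hPpos : 0 < inner ℝ (P (u w)) (f (directions w) : E) :=
      inner_pos_of_norm_sub_lt_one (norm_eq_of_mem_sphere _) (hPf (directions w))
    by_cases hw : directions w ∈ O
    · refine inner_convexComb_pos (hχ _) hPpos ?_
      rw [hfO _ hw]
      exact represents_unitSnd.inner_pos w
    · have hχw : χ (u w) = 0 := hχO ⟨directions w, hw, rfl⟩
      simpa [G, hχw] using hPpos
  refine ⟨fun w ↦ normalize (G w), ⟨isUnitMap_normalize hG fun w hw ↦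
    ne_zero_of_inner_pos (hpos ⟨w, hw⟩), fun w ↦ inner_normalize_pos (hpos w)⟩, fun w hw ↦ ?_⟩
  have hχw : χ (u w) = 1 := hχA ⟨directions w, hw, rfl⟩
  simp [G, hχw, normalize_eq_self_of_norm_eq_one (isUnitMap_unitSnd.norm_eq_one w.1 w.2)]

end Representatives

section DegreeEquiv

variable {E : Type*} [NormedAddCommGroup E] [InnerProductSpace ℝ E] [FiniteDimensional ℝ E]
  [MeasurableSpace E] [BorelSpace E] {f g h : E × E → E}

/-- Equality of all the degrees of pairs in which one of the maps is `f`, respectively `g`. It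
holds for homotopic maps. -/
def DegreeEquiv (f g : E × E → E) : Prop :=
  ∀ h, IsUnitMap h → pairDegree f h = pairDegree g h ∧ pairDegree h f = pairDegree h g

lemma DegreeEquiv.trans (hfg : DegreeEquiv f g) (hgh : DegreeEquiv g h) : DegreeEquiv f h :=
  fun k hk ↦ ⟨(hfg k hk).1.trans (hgh k hk).1, (hfg k hk).2.trans (hgh k hk).2⟩

lemma degreeEquiv_of_homotopy {F : ℝ → E × E → E}
    (hF : ContDiffOn ℝ 1 (fun q : ℝ × E × E ↦ F q.1 q.2) (univ ×ˢ puncturedPairs E))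
    (hF1 : ∀ t, ∀ w ∈ puncturedPairs E, ‖F t w‖ = 1) (hf : EqOn (F 0) f (puncturedPairs E))
    (hg : EqOn (F 1) g (puncturedPairs E)) : DegreeEquiv f g := by
  intro h hh
  have hconst : ContDiffOn ℝ 1 (fun q : ℝ × E × E ↦ h q.2) (univ ×ˢ puncturedPairs E) :=
    hh.contDiffOn.comp contDiffOn_snd fun q hq ↦ hq.2
  rw [← pairDegree_congr hf (eqOn_refl h _), ← pairDegree_congr hg (eqOn_refl h _),
    ← pairDegree_congr (eqOn_refl h _) hf, ← pairDegree_congr (eqOn_refl h _) hg]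
  exact ⟨pairDegree_eq_of_homotopy hF hconst hF1 fun _ ↦ hh.norm_eq_one,
    pairDegree_eq_of_homotopy hconst hF (fun _ ↦ hh.norm_eq_one) hF1⟩

lemma smoothTransition_mem_Icc (t : ℝ) : Real.smoothTransition t ∈ Icc 0 1 :=
  ⟨Real.smoothTransition.nonneg t, Real.smoothTransition.le_one t⟩

lemma Represents.degreeEquiv {k : sphere (0 : E) 1 × sphere (0 : E) 1 → sphere (0 : E) 1}
    (hf : Represents f k) (hg : Represents g k) : DegreeEquiv f g := by
  let G (t : ℝ) (w : E × E) : E :=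
    (1 - Real.smoothTransition t) • f w + Real.smoothTransition t • g w
  have hpos (t : ℝ) (w : puncturedPairs E) : 0 < inner ℝ (G t w) (k (directions w) : E) :=
    inner_convexComb_pos (smoothTransition_mem_Icc t) (hf.inner_pos w) (hg.inner_pos w)
  have hne (t : ℝ) (w) (hw : w ∈ puncturedPairs E) : G t w ≠ 0 :=
    ne_zero_of_inner_pos (hpos t ⟨w, hw⟩)
  have hG : ContDiffOn ℝ 1 (fun q : ℝ × E × E ↦ G q.1 q.2) (univ ×ˢ puncturedPairs E) := by
    have hmaps : MapsTo Prod.snd ((univ : Set ℝ) ×ˢ puncturedPairs E) (puncturedPairs E) :=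
      fun q hq ↦ hq.2
    have htime : ContDiffOn ℝ 1 (fun q : ℝ × E × E ↦ Real.smoothTransition q.1)
        (univ ×ˢ puncturedPairs E) := (Real.smoothTransition.contDiff.comp contDiff_fst).contDiffOn
    exact ((contDiffOn_const.sub htime).smul (hf.contDiffOn.comp contDiffOn_snd hmaps)).add
      (htime.smul (hg.contDiffOn.comp contDiffOn_snd hmaps))
  refine degreeEquiv_of_homotopy (F := fun t w ↦ normalize (G t w))
    (contDiffOn_normalize_comp hG fun q hq ↦ hne q.1 q.2 hq.2)
    (fun t w hw ↦ norm_normalize (hne t w hw)) (fun w hw ↦ ?_) fun w hw ↦ ?_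
  · simp [G, normalize_eq_self_of_norm_eq_one (hf.norm_eq_one w hw)]
  · simp [G, normalize_eq_self_of_norm_eq_one (hg.norm_eq_one w hw)]

lemma Represents.degreeEquiv_of_homotopy
    {H : I × sphere (0 : E) 1 × sphere (0 : E) 1 → sphere (0 : E) 1} (hH : Continuous H)
    (hf : Represents f fun q ↦ H (0, q)) (hg : Represents g fun q ↦ H (1, q)) :
    DegreeEquiv f g := by
  obtain ⟨P, hP, hPH⟩ := exists_contDiff_norm_sub_lt
    (isClosed_Icc.isClosedEmbedding_subtypeVal.prodMap isClosedEmbedding_prodMap_sphere)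
    ⟨_, continuous_subtype_val.comp hH⟩ one_pos
  let G (t : ℝ) (w : E × E) : E := P (Real.smoothTransition t, unitFst w, unitSnd w)
  have hpos (t : ℝ) (w : puncturedPairs E) : 0 < inner ℝ (G t w)
      (H (⟨Real.smoothTransition t, smoothTransition_mem_Icc t⟩, directions w) : E) :=
    inner_pos_of_norm_sub_lt_one (norm_eq_of_mem_sphere _) (hPH (⟨_, _⟩, directions w))
  have hne (t : ℝ) (w) (hw : w ∈ puncturedPairs E) : G t w ≠ 0 :=
    ne_zero_of_inner_pos (hpos t ⟨w, hw⟩)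
  have hG : ContDiffOn ℝ 1 (fun q : ℝ × E × E ↦ G q.1 q.2) (univ ×ˢ puncturedPairs E) :=
    hP.comp_contDiffOn <| (Real.smoothTransition.contDiff.comp contDiff_fst).contDiffOn.prodMk <|
      contDiffOn_unitFst_prodMk_unitSnd.comp contDiffOn_snd fun q hq ↦ hq.2
  have hF := contDiffOn_normalize_comp hG fun q hq ↦ hne q.1 q.2 hq.2
  have hunit (t : ℝ) : IsUnitMap fun w ↦ normalize (G t w) :=
    ⟨hF.comp (contDiffOn_const.prodMk contDiffOn_id) fun w hw ↦ ⟨mem_univ t, hw⟩,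
      fun w hw ↦ norm_normalize (hne t w hw)⟩
  have h₀ : Represents (fun w ↦ normalize (G 0 w)) fun q ↦ H (0, q) :=
    ⟨hunit 0, fun w ↦ by simpa using inner_normalize_pos (hpos 0 w)⟩
  have h₁ : Represents (fun w ↦ normalize (G 1 w)) fun q ↦ H (1, q) :=
    ⟨hunit 1, fun w ↦ by simpa using inner_normalize_pos (hpos 1 w)⟩
  exact ((hf.degreeEquiv h₀).trans (PaperTC.degreeEquiv_of_homotopy hF
    (fun t ↦ (hunit t).norm_eq_one) (eqOn_refl _ _) (eqOn_refl _ _))).trans (h₁.degreeEquiv hg)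

end DegreeEquiv

section Planners

variable {Y : Type*} [TopologicalSpace Y]

lemma continuous_ite_of_tsupport_subset {X Z R : Type*} [TopologicalSpace X] [TopologicalSpace Z]
    [Zero R] {U : Set X} (hU : IsOpen U) {φ : X → R} (hφ : tsupport φ ⊆ U)
    [DecidablePred (· ∈ U)] {f g : X → Z} (hf : ContinuousOn f U) (hg : Continuous g)
    (hfg : ∀ x ∈ U, φ x = 0 → f x = g x) : Continuous fun x ↦ if x ∈ U then f x else g x := by
  rw [← continuousOn_univ, ← eq_univ_of_forall fun x ↦ (em (x ∈ tsupport φ)).imp_left (@hφ x)]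
  refine (hf.congr fun x hx ↦ if_pos hx).union_of_isOpen (hg.continuousOn.congr fun x hx ↦ ?_) hU
    (isClosed_tsupport φ).isOpen_compl
  by_cases hxU : x ∈ U
  · simp only [hxU, if_true, hfg x hxU (image_eq_zero_of_notMem_tsupport hx)]
  · simp only [hxU, if_false]

lemma exists_homotopy_of_planner [T2Space Y] [CompactSpace Y] {U C : Set (Y × Y)} (hU : IsOpen U)
    (hC : IsClosed C) (hCU : C ⊆ U) {s : Y × Y → C(I, Y)} (hs : ContinuousOn s U)
    (hs01 : ∀ p ∈ U, s p 0 = p.1 ∧ s p 1 = p.2) :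
    ∃ H : I × Y × Y → Y, Continuous H ∧ (∀ q, H (0, q) = q.1) ∧ ∀ q ∈ C, H (1, q) = q.2 := by
  classical
  obtain ⟨φ, hφU, hφC, hφ⟩ :=
    exists_tsupport_one_of_isOpen_isClosed hU isClosed_closure.isCompact hC hCU
  let τ (z : I × Y × Y) : I := z.1 * ⟨φ z.2, hφ z.2⟩
  have hτ : Continuous τ :=
    continuous_fst.mul ((φ.continuous.comp continuous_snd).subtype_mk fun z ↦ hφ z.2)
  refine ⟨fun z ↦ if z ∈ Prod.snd ⁻¹' U then s z.2 (τ z) else z.2.1,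
    continuous_ite_of_tsupport_subset (φ := fun z ↦ φ z.2) (hU.preimage continuous_snd)
      ?_ ?_ (by fun_prop) ?_, fun q ↦ ?_, fun q hq ↦ ?_⟩
  · exact (tsupport_comp_subset_preimage φ continuous_snd).trans (preimage_mono hφU)
  · exact continuous_eval.comp_continuousOn <|
      (hs.comp continuousOn_snd fun z hz ↦ hz).prodMk hτ.continuousOn
  · intro z hz hφz
    have hτz : τ z = 0 := by simp [τ, hφz]
    rw [hτz, (hs01 z.2 hz).1]
  · by_cases hq : q ∈ U
    · simp [hq, τ, (hs01 q hq).1]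
    · simp [hq]
  · have hτq : τ (1, q) = 1 := by simp [τ, hφC hq]
    simp [hCU hq, hτq, (hs01 q (hCU hq)).2]

lemma TCcover.joined {k : ℕ} (h : TCcover Y k) (x y : Y) : Joined x y := by
  obtain ⟨U, -, hcov, hs⟩ := h
  obtain ⟨i, hi⟩ := mem_iUnion.1 (hcov ▸ mem_univ (x, y))
  obtain ⟨s, -, hs01⟩ := hs i
  exact ⟨⟨s (x, y), (hs01 _ hi).1, (hs01 _ hi).2⟩⟩

end Planners

section LowerBounds

variable {E : Type*} [NormedAddCommGroup E] [InnerProductSpace ℝ E]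

lemma not_joined_neg_of_finrank_eq_one (hE : Module.finrank ℝ E = 1) (x : sphere (0 : E) 1) :
    ¬ Joined x (-x) := by
  rintro ⟨γ⟩
  have hx : ‖(x : E)‖ = 1 := norm_eq_of_mem_sphere x
  have hcont : Continuous fun t ↦ inner ℝ (x : E) (γ t : E) :=
    continuous_const.inner (continuous_subtype_val.comp γ.continuous)
  obtain ⟨t, ht⟩ := mem_range_of_exists_le_of_exists_ge (c := 0) hcont
    ⟨1, by simp [hx]⟩ ⟨0, by simp [hx]⟩
  obtain ⟨c, hc⟩ := (finrank_eq_one_iff_of_nonzero' (x : E) (norm_ne_zero_iff.1 (by simp))).1 hE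
    (γ t : E)
  have hc0 : c = 0 := by simpa [← hc, inner_smul_right, hx] using ht
  simpa [← hc, hc0] using norm_eq_of_mem_sphere (γ t)

variable [FiniteDimensional ℝ E]

lemma not_degreeEquiv_unitFst_unitSnd [MeasurableSpace E] [BorelSpace E]
    (hE : 2 ≤ Module.finrank ℝ E) : ¬ DegreeEquiv (unitFst (E := E)) unitSnd := by
  intro h
  have : Nontrivial E := Module.nontrivial_of_finrank_pos (R := ℝ) (by omega)
  have hzero := (h unitSnd isUnitMap_unitSnd).1
  rw [pairDegree_unitFst_unitSnd, isUnitMap_unitSnd.pairDegree_self hE] at hzero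
  exact setIntegral_pairWeight_pos.ne' hzero

theorem not_TCcover_sphere_one (hE : 2 ≤ Module.finrank ℝ E) :
    ¬ TCcover (sphere (0 : E) 1) 1 := by
  rintro ⟨U, hU, hcov, hs⟩
  obtain ⟨s, hs, hs01⟩ := hs 0
  have hU0 : U 0 = univ := (iSup_unique U).symm.trans hcov
  obtain ⟨H, hH, hH0, hH1⟩ := exists_homotopy_of_planner (hU 0) isClosed_univ hU0.ge hs hs01
  borelize E
  exact not_degreeEquiv_unitFst_unitSnd hE <| Represents.degreeEquiv_of_homotopy hH
    (by simpa only [hH0] using represents_unitFst)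
    (by simpa only [hH1 _ (mem_univ _)] using represents_unitSnd)

lemma exists_degreeEquiv_unitFst_eq_unitSnd [MeasurableSpace E] [BorelSpace E]
    {U C : Set (sphere (0 : E) 1 × sphere (0 : E) 1)} (hU : IsOpen U) (hC : IsClosed C)
    (hCU : C ⊆ U) {s : sphere (0 : E) 1 × sphere (0 : E) 1 → C(I, sphere (0 : E) 1)}
    (hs : ContinuousOn s U) (hs01 : ∀ p ∈ U, s p 0 = p.1 ∧ s p 1 = p.2) :
    ∃ F : E × E → E, IsUnitMap F ∧ DegreeEquiv unitFst F ∧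
      ∀ w : puncturedPairs E, directions w ∈ C → F w = unitSnd (w : E × E) := by
  obtain ⟨O, hO, hCO, hOU⟩ := normal_exists_closure_subset hC hU hCU
  obtain ⟨H, hH, hH0, hH1⟩ := exists_homotopy_of_planner hU isClosed_closure hOU hs hs01
  obtain ⟨F, hF, hFC⟩ := exists_represents_eq_unitSnd (hH.comp (Continuous.prodMk_right 1)) hC hO
    hCO fun q hq ↦ hH1 q (subset_closure hq)
  exact ⟨F, hF.toIsUnitMap, Represents.degreeEquiv_of_homotopy hH
    (by simpa only [hH0] using represents_unitFst) hF, hFC⟩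

lemma even_finrank_of_degreeEquiv_unitFst [MeasurableSpace E] [BorelSpace E]
    (hE : 2 ≤ Module.finrank ℝ E) {f g : E × E → E} (hf : IsUnitMap f) (hg : IsUnitMap g)
    (hff : DegreeEquiv unitFst f) (hgg : DegreeEquiv unitFst g)
    (hfg : ∀ w ∈ puncturedPairs E, f =ᶠ[𝓝 w] unitSnd ∨ g =ᶠ[𝓝 w] unitSnd) :
    Even (Module.finrank ℝ E) := by
  have : Nontrivial E := Module.nontrivial_of_finrank_pos (R := ℝ) (by omega)
  have hadd := pairDegree_add_pairDegree_self hf hg isUnitMap_unitSnd hfg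
  rw [← (hff g hg).1, ← (hgg _ isUnitMap_unitFst).2, ← (hff _ isUnitMap_unitSnd).1,
    ← (hgg _ isUnitMap_unitSnd).2, isUnitMap_unitFst.pairDegree_self hE,
    isUnitMap_unitSnd.pairDegree_self hE, pairDegree_unitFst_unitSnd, pairDegree_unitSnd_unitFst]
    at hadd
  by_contra hodd
  rw [Even.neg_one_pow ((Nat.not_even_iff_odd.1 hodd).add_one)] at hadd
  linarith [setIntegral_pairWeight_pos (E := E)]

theorem even_finrank_of_TCcover_sphere_two (h : TCcover (sphere (0 : E) 1) 2) :
    Even (Module.finrank ℝ E) := by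
  rcases lt_or_ge (Module.finrank ℝ E) 2 with hlt | hE
  · by_contra hodd
    have hE : Module.finrank ℝ E = 1 := by
      have := (Nat.not_even_iff_odd.1 hodd).pos
      omega
    have : Nontrivial E := Module.nontrivial_of_finrank_eq_succ hE
    obtain ⟨x, hx⟩ := NormedSpace.sphere_nonempty (x := (0 : E)) (r := 1) |>.2 zero_le_one
    exact not_joined_neg_of_finrank_eq_one hE ⟨x, hx⟩ (h.joined _ _)
  obtain ⟨U, hU, hcov, hs⟩ := h
  choose s hs hs01 using hs
  obtain ⟨V, hVcov, hV, hVU⟩ := exists_iUnion_eq_closure_subset hU (fun _ ↦ toFinite _) hcov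
  borelize E
  choose F hF hFF hFV using fun i ↦ exists_degreeEquiv_unitFst_eq_unitSnd (hU i) isClosed_closure
    (hVU i) (hs i) (hs01 i)
  refine even_finrank_of_degreeEquiv_unitFst hE (hF 0) (hF 1) (hFF 0) (hFF 1) fun w hw ↦ ?_
  obtain ⟨i, hi⟩ := mem_iUnion.1 (hVcov ▸ mem_univ (directions ⟨w, hw⟩))
  have hnear : F i =ᶠ[𝓝 w] unitSnd := by
    rw [EventuallyEq, ← isOpen_puncturedPairs.isOpenEmbedding_subtypeVal.map_nhds_eq ⟨w, hw⟩,
      eventually_map]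
    filter_upwards [((hV i).preimage continuous_directions).mem_nhds hi] with z hz
    exact hFV i z (subset_closure hz)
  fin_cases i
  exacts [Or.inl hnear, Or.inr hnear]

end LowerBounds

section SkewAdjoint

open Module

variable {E : Type*} [NormedAddCommGroup E] [InnerProductSpace ℝ E]

lemma ker_add_of_isOrtho_range {F : Type*} [AddCommGroup F] [Module ℝ F] {A B : F →ₗ[ℝ] E}
    (h : A.range ⟂ B.range) :
    (A + B).ker = A.ker ⊓ B.ker := by
  refine le_antisymm (fun x hx ↦ ?_) fun x ⟨hA, hB⟩ ↦ ?_
  · have hAB : A x + B x = 0 := hx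
    have hA : A x = 0 := by
      have hortho := Submodule.isOrtho_iff_inner_eq.1 h (A x) ⟨x, rfl⟩ (B x) ⟨x, rfl⟩
      rwa [eq_neg_of_add_eq_zero_right hAB, inner_neg_right, neg_eq_zero, inner_self_eq_zero]
        at hortho
    exact ⟨hA, by rwa [hA, zero_add] at hAB⟩
  · exact (congrArg₂ (· + ·) hA hB).trans (add_zero 0)

variable [FiniteDimensional ℝ E]

lemma mem_skewAdjoint_iff_inner {J : E →ₗ[ℝ] E} :
    J ∈ skewAdjoint (E →ₗ[ℝ] E) ↔ ∀ x y, inner ℝ (J x) y = -inner ℝ x (J y) := by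
  rw [skewAdjoint.mem_iff, LinearMap.star_eq_adjoint, eq_comm, LinearMap.eq_adjoint_iff]
  simp only [LinearMap.neg_apply, inner_neg_left, neg_eq_iff_eq_neg]

lemma inner_self_of_mem_skewAdjoint {J : E →ₗ[ℝ] E} (hJ : J ∈ skewAdjoint (E →ₗ[ℝ] E)) (x : E) :
    inner ℝ (J x) x = 0 := by
  have hskew := mem_skewAdjoint_iff_inner.1 hJ x x
  rw [real_inner_comm (J x) x] at hskew
  linarith

lemma orthogonal_ker_of_mem_skewAdjoint {J : E →ₗ[ℝ] E} (hJ : J ∈ skewAdjoint (E →ₗ[ℝ] E)) :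
    J.kerᗮ = J.range := by
  rw [J.orthogonal_ker, ← LinearMap.star_eq_adjoint, skewAdjoint.mem_iff.1 hJ, LinearMap.range_neg]

lemma even_finrank_of_mem_skewAdjoint {J : E →ₗ[ℝ] E} (hJ : J ∈ skewAdjoint (E →ₗ[ℝ] E))
    (hker : J.ker = ⊥) : Even (finrank ℝ E) := by
  have hdet : LinearMap.det J.adjoint = LinearMap.det J := by
    let b := stdOrthonormalBasis ℝ E
    rw [← LinearMap.det_toMatrix b.toBasis, ← LinearMap.det_toMatrix b.toBasis,
      LinearMap.toMatrix_adjoint, Matrix.det_conjTranspose, star_trivial]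
  rw [← LinearMap.star_eq_adjoint, skewAdjoint.mem_iff.1 hJ, ← neg_one_smul ℝ J,
    LinearMap.det_smul] at hdet
  by_contra hodd
  rw [(Nat.not_even_iff_odd.1 hodd).neg_one_pow] at hdet
  exact (LinearMap.det_eq_zero_iff_ker_ne_bot.1 (by linarith)) hker

lemma even_finrank_range_of_mem_skewAdjoint {J : E →ₗ[ℝ] E}
    (hJ : J ∈ skewAdjoint (E →ₗ[ℝ] E)) : Even (finrank ℝ J.range) := by
  let J' : J.range →ₗ[ℝ] J.range := J.restrict fun x _ ↦ J.mem_range_self x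
  refine even_finrank_of_mem_skewAdjoint (J := J')
    (mem_skewAdjoint_iff_inner.2 fun x y ↦ mem_skewAdjoint_iff_inner.1 hJ x y) ?_
  rw [LinearMap.ker_restrict, ← orthogonal_ker_of_mem_skewAdjoint hJ,
    ← Submodule.disjoint_iff_comap_eq_bot]
  exact J.ker.orthogonal_disjoint.symm

lemma exists_mem_skewAdjoint_range_eq (W : Submodule ℝ E) (hW : Even (finrank ℝ W)) :
    ∃ J ∈ skewAdjoint (E →ₗ[ℝ] E), J.range = W := by
  obtain ⟨m, hm⟩ := hW
  have hdim : finrank ℝ (EuclideanSpace ℂ (Fin m)) = finrank ℝ W := by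
    rw [finrank_real_of_complex, finrank_euclideanSpace_fin, hm, two_mul]
  let e : EuclideanSpace ℂ (Fin m) ≃ₗ[ℝ] W := .ofFinrankEq _ _ hdim
  let M : EuclideanSpace ℂ (Fin m) →ₗ[ℝ] E := W.subtype ∘ₗ e.toLinearMap
  let i : EuclideanSpace ℂ (Fin m) →ₗ[ℝ] EuclideanSpace ℂ (Fin m) :=
    Complex.I • LinearMap.id
  have hi : i ∈ skewAdjoint (EuclideanSpace ℂ (Fin m) →ₗ[ℝ] EuclideanSpace ℂ (Fin m)) := by
    refine mem_skewAdjoint_iff_inner.2 fun x y ↦ ?_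
    simp only [i, PiLp.inner_apply, ← Finset.sum_neg_distrib]
    refine Finset.sum_congr rfl fun j _ ↦ ?_
    simp [Complex.inner]
    ring
  have hirange : i.range = ⊤ :=
    LinearMap.range_eq_top.2 fun x ↦ ⟨-Complex.I • x, by simp [i, smul_smul]⟩
  have hMrange : M.adjoint.range = ⊤ := by
    have hM : Function.Injective M := W.subtype_injective.comp e.injective
    rw [← M.orthogonal_ker, LinearMap.ker_eq_bot.2 hM, Submodule.bot_orthogonal_eq_top]
  refine ⟨M ∘ₗ i ∘ₗ M.adjoint, ?_, ?_⟩
  · rw [skewAdjoint.mem_iff, LinearMap.star_eq_adjoint] at hi ⊢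
    simp [LinearMap.adjoint_comp, hi, LinearMap.comp_assoc, LinearMap.neg_comp, LinearMap.comp_neg]
  · rw [LinearMap.range_comp, LinearMap.range_comp, hMrange, Submodule.map_top, hirange,
      Submodule.map_top, LinearMap.range_comp, LinearEquiv.range, Submodule.map_top,
      Submodule.range_subtype]

lemma commute_of_mul_eq_self {R : Type*} [Ring R] [StarRing R] {T J : R} (hT : star T * T = 1)
    (hJ : J ∈ skewAdjoint R) (hTJ : T * J = J) : Commute J T := by
  have hJT : J * star T = J := by
    simpa [skewAdjoint.mem_iff.1 hJ] using congrArg star hTJ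
  calc J * T = J * star T * T := by rw [hJT]
    _ = T * J := by rw [mul_assoc, hT, mul_one, hTJ]

lemma sub_star_mem_skewAdjoint {R : Type*} [Ring R] [StarRing R] (a : R) :
    a - star a ∈ skewAdjoint R := by
  rw [skewAdjoint.mem_iff, star_sub, star_star, neg_sub]

lemma ker_sub_star_of_mem_unitary {T : E →ₗ[ℝ] E} (hT : T ∈ unitary (E →ₗ[ℝ] E)) :
    (T - star T).ker = End.eigenspace T 1 ⊔ End.eigenspace T (-1) := by
  have hstar (x : E) : star T (T x) = x :=
    LinearMap.congr_fun (Unitary.star_mul_self_of_mem hT) x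
  have hstar' (x : E) : T (star T x) = x :=
    LinearMap.congr_fun (Unitary.mul_star_self_of_mem hT) x
  refine le_antisymm (fun x hx ↦ ?_) (sup_le (fun x hx ↦ ?_) fun x hx ↦ ?_)
  · have hTT : T (T x) = x := by rw [sub_eq_zero.1 hx, hstar']
    rw [show x = (2⁻¹ : ℝ) • (x + T x) + (2⁻¹ : ℝ) • (x - T x) by module]
    refine add_mem (Submodule.mem_sup_left ?_) (Submodule.mem_sup_right ?_) <;>
      rw [End.mem_eigenspace_iff] <;> simp only [map_smul, map_add, map_sub, hTT] <;> module
  · rw [End.mem_eigenspace_iff, one_smul] at hx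
    have := hstar x
    rw [hx] at this
    simp [hx, this]
  · rw [End.mem_eigenspace_iff, neg_one_smul] at hx
    have := hstar x
    simp only [hx, map_neg, neg_eq_iff_eq_neg] at this
    simp [hx, this]

lemma isOrtho_eigenspace_one_neg_one {T : E →ₗ[ℝ] E} (hT : T ∈ unitary (E →ₗ[ℝ] E)) :
    End.eigenspace T 1 ⟂ End.eigenspace T (-1) := by
  refine Submodule.isOrtho_iff_inner_eq.2 fun x hx y hy ↦ ?_
  rw [End.mem_eigenspace_iff, one_smul] at hx
  rw [End.mem_eigenspace_iff, neg_one_smul] at hy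
  have hxy : inner ℝ (T x) (T y) = inner ℝ x y := by
    rw [← T.adjoint_inner_right, ← LinearMap.star_eq_adjoint, ← Module.End.mul_apply,
      Unitary.star_mul_self_of_mem hT, Module.End.one_apply]
  rw [hx, hy, inner_neg_right] at hxy
  linarith

lemma even_finrank_eigenspace_neg_one {T : E →ₗ[ℝ] E} (hT : T ∈ unitary (E →ₗ[ℝ] E))
    (hE : Even (finrank ℝ E)) (h1 : Even (finrank ℝ (End.eigenspace T 1))) :
    Even (finrank ℝ (End.eigenspace T (-1))) := by
  have hrank := (T - star T).finrank_range_add_finrank_ker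
  have hsup := Submodule.finrank_sup_add_finrank_inf_eq (End.eigenspace T 1)
    (End.eigenspace T (-1))
  rw [(isOrtho_eigenspace_one_neg_one hT).disjoint.eq_bot, finrank_bot, add_zero] at hsup
  rw [ker_sub_star_of_mem_unitary hT, hsup] at hrank
  have hrange := even_finrank_range_of_mem_skewAdjoint (sub_star_mem_skewAdjoint T)
  rw [← hrank] at hE
  exact (Nat.even_add.1 ((Nat.even_add.1 hE).1 hrange)).1 h1

theorem exists_mem_skewAdjoint_ker_eq_bot_commute {T : E →ₗ[ℝ] E} (hT : T ∈ unitary (E →ₗ[ℝ] E))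
    (hE : Even (finrank ℝ E)) (h1 : Even (finrank ℝ (End.eigenspace T 1))) :
    ∃ J ∈ skewAdjoint (E →ₗ[ℝ] E), J.ker = ⊥ ∧ Commute J T := by
  obtain ⟨A, hA, hAr⟩ := exists_mem_skewAdjoint_range_eq _ h1
  obtain ⟨B, hB, hBr⟩ :=
    exists_mem_skewAdjoint_range_eq _ (even_finrank_eigenspace_neg_one hT hE h1)
  have hD := sub_star_mem_skewAdjoint T
  have hTA : T * A = A := LinearMap.ext fun x ↦ by
    have hx := A.mem_range_self x
    rwa [hAr, End.mem_eigenspace_iff, one_smul] at hx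
  have hTB : -T * B = B := LinearMap.ext fun x ↦ by
    have hx := B.mem_range_self x
    rwa [hBr, End.mem_eigenspace_iff, neg_one_smul, ← neg_eq_iff_eq_neg] at hx
  have hAB : A.range ⟂ B.range := by
    rw [hAr, hBr]
    exact isOrtho_eigenspace_one_neg_one hT
  have hDAB : (T - star T).range ⟂ (A + B).range := by
    rw [← orthogonal_ker_of_mem_skewAdjoint hD, ker_sub_star_of_mem_unitary hT, ← hAr, ← hBr]
    exact (Submodule.isOrtho_orthogonal_left _).mono_right (LinearMap.range_add_le A B)
  refine ⟨T - star T + (A + B), add_mem hD (add_mem hA hB), ?_, ?_⟩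
  · rw [ker_add_of_isOrtho_range hDAB, ker_add_of_isOrtho_range hAB,
      ← Submodule.orthogonal_orthogonal A.ker, ← Submodule.orthogonal_orthogonal B.ker,
      orthogonal_ker_of_mem_skewAdjoint hA, orthogonal_ker_of_mem_skewAdjoint hB, hAr, hBr,
      Submodule.inf_orthogonal, ← ker_sub_star_of_mem_unitary hT]
    exact Submodule.inf_orthogonal_eq_bot _
  · have hT' := Unitary.star_mul_self_of_mem hT
    have hstar : Commute (star T) T := hT'.trans (Unitary.mul_star_self_of_mem hT).symm
    have hBT : Commute B (-T) := commute_of_mul_eq_self (by rw [star_neg, neg_mul_neg, hT']) hB hTB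
    exact ((Commute.refl T).sub_left hstar).add_left
      ((commute_of_mul_eq_self hT' hA hTA).add_left (neg_neg T ▸ hBT.neg_right))

end SkewAdjoint

section Covers

lemma minCover_eq_coe_iff {P : ℕ → Prop} {k : ℕ} :
    minCover P = k ↔ IsLeast {m | 1 ≤ m ∧ P m} k := by
  have himage : {l : ℕ∞ | ∃ m : ℕ, l = m ∧ 1 ≤ m ∧ P m} = (↑) '' {m | 1 ≤ m ∧ P m} := by
    ext l
    simp only [mem_ofPred_eq, mem_image, eq_comm, and_comm]
  rw [minCover, himage]
  constructor
  · intro h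
    have hne : {m | 1 ≤ m ∧ P m}.Nonempty := by
      by_contra hempty
      rw [not_nonempty_iff_eq_empty.1 hempty, image_empty, sInf_empty] at h
      exact ENat.top_ne_natCast k h
    obtain ⟨m, hm, hmk⟩ := csInf_mem (hne.image ((↑) : ℕ → ℕ∞))
    rw [h, Nat.cast_inj] at hmk
    refine ⟨hmk ▸ hm, fun l hl ↦ (Nat.cast_le (α := ℕ∞)).1 ?_⟩
    exact h ▸ sInf_le (mem_image_of_mem _ hl)
  · exact fun h ↦ (Nat.mono_cast.map_isLeast h).csInf_eq

lemma minCover_eq_two_iff {P : ℕ → Prop} : minCover P = 2 ↔ P 2 ∧ ¬ P 1 := by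
  rw [← Nat.cast_ofNat (n := 2), minCover_eq_coe_iff]
  refine ⟨fun h ↦ ⟨h.1.2, fun h1 ↦ ?_⟩, fun h ↦ ⟨⟨one_le_two, h.1⟩, fun m hm ↦ ?_⟩⟩
  · exact absurd (h.2 ⟨le_rfl, h1⟩) (by norm_num)
  · exact hm.1.lt_of_ne fun h1 ↦ h.2 (h1 ▸ hm.2)

lemma exists_continuousOn_lift {A K X Z : Type*} [TopologicalSpace A] [TopologicalSpace K]
    [TopologicalSpace X] [TopologicalSpace Z] [Nonempty Z] {j : Z → X} (hj : IsEmbedding j)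
    {S : Set A} {f : A → C(K, X)} (hf : ContinuousOn f S)
    (hfj : ∀ a ∈ S, ∀ t, f a t ∈ range j) :
    ∃ F : A → C(K, Z), ContinuousOn F S ∧ ∀ a ∈ S, ∀ t, j (F a t) = f a t := by
  have hlift (a : A) : ∃ γ : C(K, Z), a ∈ S → ∀ t, j (γ t) = f a t := by
    by_cases ha : a ∈ S
    · choose γ hγ using hfj a ha
      have hcont : Continuous γ :=
        hj.continuous_iff.2 <| (funext hγ : j ∘ γ = f a) ▸ (f a).continuous
      exact ⟨⟨γ, hcont⟩, fun _ ↦ hγ⟩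
    · exact ⟨.const K (Classical.arbitrary Z), fun h ↦ absurd h ha⟩
  choose F hF using hlift
  refine ⟨F, ?_, hF⟩
  rw [(ContinuousMap.isInducing_postcomp ⟨j, hj.continuous⟩ hj.isInducing).continuousOn_iff]
  exact hf.congr fun a ha ↦ ContinuousMap.ext (hF a ha)

variable {G X : Type*} [TopologicalSpace X] {act : G → X → X} {k : ℕ}

lemma eqTCcover.TCcover (h : eqTCcover act k) : TCcover X k := by
  obtain ⟨U, hU, hcov, hs⟩ := h
  refine ⟨U, hU, hcov, fun i ↦ ?_⟩
  obtain ⟨-, s, hs, hs01, -⟩ := hs i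
  exact ⟨s, hs, hs01⟩

lemma eqTCcover.TCcover_of_range_eq_fixedSet {Z : Type*} [TopologicalSpace Z] [Nonempty Z]
    (h : eqTCcover act k) {j : Z → X} (hj : IsEmbedding j) (hrange : range j = fixedSet act) :
    PaperTC.TCcover Z k := by
  obtain ⟨U, hU, hcov, hs⟩ := h
  have hjj : Continuous (Prod.map j j) := hj.continuous.prodMap hj.continuous
  have hfix (g : G) (z : Z) : act g (j z) = j z :=
    (hrange ▸ mem_range_self z : j z ∈ fixedSet act) g
  refine ⟨fun i ↦ Prod.map j j ⁻¹' U i, fun i ↦ (hU i).preimage hjj, ?_, fun i ↦ ?_⟩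
  · rw [← preimage_iUnion, hcov, preimage_univ]
  obtain ⟨-, s, hs, hs01, hsg⟩ := hs i
  have hsfix : ∀ q ∈ Prod.map j j ⁻¹' U i, ∀ t, s (Prod.map j j q) t ∈ range j := by
    intro q hq t
    rw [hrange]
    intro g
    rw [← hsg g _ hq t, Prod.map_fst, Prod.map_snd, hfix, hfix, Prod.map_apply']
  obtain ⟨F, hF, hFs⟩ := exists_continuousOn_lift hj
    (hs.comp hjj.continuousOn (mapsTo_preimage _ _)) hsfix
  refine ⟨F, hF, fun q hq ↦ ⟨hj.injective ?_, hj.injective ?_⟩⟩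
  · rw [hFs q hq, Function.comp_apply, (hs01 _ hq).1, Prod.map_fst]
  · rw [hFs q hq, Function.comp_apply, (hs01 _ hq).2, Prod.map_snd]

/-- The invariant set `U` admits an equivariant motion planner. -/
def HasEquivariantPlanner (act : G → X → X) (U : Set (X × X)) : Prop :=
  (∀ g p, p ∈ U → (act g p.1, act g p.2) ∈ U) ∧
    ∃ s : X × X → C(I, X), ContinuousOn s U ∧ (∀ p ∈ U, s p 0 = p.1 ∧ s p 1 = p.2) ∧
      ∀ g p, p ∈ U → ∀ t : I, s (act g p.1, act g p.2) t = act g (s p t)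

lemma eqTCcover_two_of_union_eq_univ {U V : Set (X × X)} (hU : IsOpen U) (hV : IsOpen V)
    (hUV : U ∪ V = univ) (hsU : HasEquivariantPlanner act U) (hsV : HasEquivariantPlanner act V) :
    eqTCcover act 2 :=
  ⟨![U, V], Fin.forall_fin_two.2 ⟨hU, hV⟩,
    by simpa [iUnion_eq_univ_iff, eq_univ_iff_forall] using hUV, Fin.forall_fin_two.2 ⟨hsU, hsV⟩⟩

end Covers

section SpherePlanners

lemma convexComb_ne_zero_of_ne_neg {E : Type*} [NormedAddCommGroup E] [NormedSpace ℝ E]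
    {x y : E} (hxy : ‖x‖ = ‖y‖) (hne : x ≠ -y) {t : ℝ} (ht : t ∈ Icc (0 : ℝ) 1) :
    (1 - t) • x + t • y ≠ 0 := by
  intro h
  have hx : (1 - t) • x = t • -y := by rw [smul_neg, eq_neg_of_add_eq_zero_left h]
  have hnorm : (1 - t) * ‖y‖ = t * ‖y‖ := by
    simpa [norm_smul, abs_of_nonneg ht.1, abs_of_nonneg (sub_nonneg.2 ht.2), hxy]
      using congrArg norm hx
  rcases mul_eq_mul_right_iff.1 hnorm with ht | hy
  · rw [ht] at hx
    exact hne (smul_right_injective E (show t ≠ 0 by linarith) hx)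
  · rw [norm_eq_zero.1 hy, norm_zero, norm_eq_zero] at hxy
    exact hne (by rw [hxy, norm_eq_zero.1 hy, neg_zero])

lemma smul_add_smul_skewAdjoint_ne_zero {E : Type*} [NormedAddCommGroup E] [InnerProductSpace ℝ E]
    [FiniteDimensional ℝ E] {J : E →ₗ[ℝ] E} (hJ : J ∈ skewAdjoint (E →ₗ[ℝ] E)) (hker : J.ker = ⊥)
    {x : E} (hx : x ≠ 0) (u : ℝ) : (1 - 2 * u) • x + (u * (1 - u)) • J x ≠ 0 := by
  intro h
  have hinner := congrArg (inner ℝ · x) h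
  simp only [inner_add_left, inner_smul_left, inner_self_of_mem_skewAdjoint hJ, mul_zero, add_zero,
    inner_zero_left] at hinner
  have hu : 1 - 2 * u = 0 := (mul_eq_zero.1 hinner).resolve_right (inner_self_ne_zero.2 hx)
  rw [hu, zero_smul, zero_add, smul_eq_zero] at h
  rcases h with h | h
  · nlinarith
  · exact hx (LinearMap.ker_eq_bot'.1 hker x h)

variable {n : ℕ} {G : Type*} [Monoid G]
    {ρ : G →* (EuclideanSpace ℝ (Fin (n + 1)) ≃ₗᵢ[ℝ] EuclideanSpace ℝ (Fin (n + 1)))}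

lemma sphereAct_injective (g : G) : Function.Injective (sphereAct ρ g) := fun _ _ h ↦
  Subtype.ext ((ρ g).injective (congrArg Subtype.val h))

lemma sphereAct_neg (g : G) (x : Sph n) : sphereAct ρ g (-x) = -sphereAct ρ g x :=
  Subtype.ext (map_neg (ρ g) (x : EuclideanSpace ℝ (Fin (n + 1))))

lemma hasEquivariantPlanner_of_ne_zero
    {N : ℝ × EuclideanSpace ℝ (Fin (n + 1)) × EuclideanSpace ℝ (Fin (n + 1)) →
      EuclideanSpace ℝ (Fin (n + 1))} {U : Set (Sph n × Sph n)}
    (hU : ∀ g p, p ∈ U → (sphereAct ρ g p.1, sphereAct ρ g p.2) ∈ U) (hN : Continuous N)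
    (hN0 : ∀ q ∈ U, ∀ t : I, N (t, q.1, q.2) ≠ 0) (hNfst : ∀ x y, N (0, x, y) = x)
    (hNsnd : ∀ x y, N (1, x, y) = y)
    (hNρ : ∀ g t x y, N (t, ρ g x, ρ g y) = ρ g (N (t, x, y))) :
    HasEquivariantPlanner (sphereAct ρ) U := by
  classical
  let F : C(U × I, Sph n) :=
    ⟨fun z ↦ ⟨normalize (N (z.2, z.1.1.1, z.1.1.2)),
      mem_sphere_zero_iff_norm.2 (norm_normalize (hN0 _ z.1.2 _))⟩, by
      refine Continuous.subtype_mk ?_ _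
      have hcont : Continuous fun z : U × I ↦ N (z.2, (z.1.1.1 : EuclideanSpace ℝ (Fin (n + 1))),
          z.1.1.2) := by fun_prop
      exact (hcont.norm.inv₀ fun z ↦ norm_ne_zero_iff.2 (hN0 _ z.1.2 _)).smul hcont⟩
  refine ⟨hU, fun p ↦ if hp : p ∈ U then F.curry ⟨p, hp⟩ else .const I p.1, ?_, fun p hp ↦ ?_,
    fun g p hp t ↦ ?_⟩
  · rw [continuousOn_iff_continuous_domRestrict]
    convert F.curry.continuous using 1
    ext z
    simp
  · simp only [dif_pos hp]
    constructor <;> ext1 <;>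
      simp [F, hNfst, hNsnd, normalize_eq_self_of_norm_eq_one]
  · simp only [dif_pos hp, dif_pos (hU g p hp)]
    ext1
    simp [F, sphereAct, hNρ, NormedSpace.normalize]

lemma hasEquivariantPlanner_ne_neg :
    HasEquivariantPlanner (sphereAct ρ) {q | q.1 ≠ -q.2} := by
  refine hasEquivariantPlanner_of_ne_zero (N := fun z ↦ (1 - z.1) • z.2.1 + z.1 • z.2.2)
    (fun g q hq h ↦ hq (sphereAct_injective g (h.trans (sphereAct_neg g q.2).symm)))
    (by fun_prop) (fun q hq t ↦ ?_) (by simp) (by simp) (by simp)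
  exact convexComb_ne_zero_of_ne_neg (by simp) (fun h ↦ hq (Subtype.ext h)) t.2

lemma hasEquivariantPlanner_ne
    {J : EuclideanSpace ℝ (Fin (n + 1)) →ₗ[ℝ] EuclideanSpace ℝ (Fin (n + 1))}
    (hJ : J ∈ skewAdjoint _) (hker : J.ker = ⊥) (hJρ : ∀ g x, J (ρ g x) = ρ g (J x)) :
    HasEquivariantPlanner (sphereAct ρ) {q | q.1 ≠ q.2} := by
  have hJcont : Continuous J := J.continuous_of_finiteDimensional
  let u (t : ℝ) : ℝ := min (2 * t) 1
  let v (t : ℝ) : ℝ := max (2 * t - 1) 0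
  refine hasEquivariantPlanner_of_ne_zero
    (N := fun z ↦ (1 - v z.1) • ((1 - 2 * u z.1) • z.2.1 + (u z.1 * (1 - u z.1)) • J z.2.1) +
      v z.1 • z.2.2)
    (fun g q hq h ↦ hq (sphereAct_injective g h)) (by fun_prop) (fun q hq t ↦ ?_)
    (by simp [u, v]) (by norm_num [u, v])
    (by simp [hJρ])
  rcases le_total (2 * (t : ℝ)) 1 with ht | ht
  · have hv : v t = 0 := max_eq_right (by linarith)
    simpa [hv] using
      smul_add_smul_skewAdjoint_ne_zero hJ hker (ne_zero_of_mem_unit_sphere q.1) (u t)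
  · have hu : u t = 1 := min_eq_right ht
    have hv : v t ∈ Icc (0 : ℝ) 1 :=
      ⟨le_max_right _ _, max_le (by linarith [t.2.2]) zero_le_one⟩
    have hne : -(q.1 : EuclideanSpace ℝ (Fin (n + 1))) ≠ -q.2 :=
      fun h ↦ hq (Subtype.ext (neg_inj.1 h))
    have hantipode : (1 - 2 * u t) • (q.1 : EuclideanSpace ℝ (Fin (n + 1))) +
        (u t * (1 - u t)) • J q.1 = -q.1 := by
      norm_num [hu]
    simpa only [hantipode] using convexComb_ne_zero_of_ne_neg (by simp) hne hv

lemma eqTCcover_sphereAct_two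
    {J : EuclideanSpace ℝ (Fin (n + 1)) →ₗ[ℝ] EuclideanSpace ℝ (Fin (n + 1))}
    (hJ : J ∈ skewAdjoint _) (hker : J.ker = ⊥) (hJρ : ∀ g x, J (ρ g x) = ρ g (J x)) :
    eqTCcover (sphereAct ρ) 2 := by
  refine eqTCcover_two_of_union_eq_univ (isOpen_ne_fun continuous_fst continuous_snd.neg)
    (isOpen_ne_fun continuous_fst continuous_snd) ?_ hasEquivariantPlanner_ne_neg
    (hasEquivariantPlanner_ne hJ hker hJρ)
  refine eq_univ_of_forall fun q ↦ or_iff_not_imp_right.2 fun hq hneg ↦ ?_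
  exact ne_neg_of_mem_unit_sphere ℝ q.2 ((not_not.1 hq).symm.trans hneg)

end SpherePlanners

section CyclicGroups

open Module

variable {E : Type*} [NormedAddCommGroup E] {G : Type*} [Group G]

lemma exists_isEmbedding_sphere_submodule [NormedSpace ℝ E] (V : Submodule ℝ E) :
    ∃ j : sphere (0 : V) 1 → sphere (0 : E) 1,
      IsEmbedding j ∧ range j = {x : sphere (0 : E) 1 | (x : E) ∈ V} := by
  let j : sphere (0 : V) 1 → sphere (0 : E) 1 :=
    fun v ↦ ⟨v.1, mem_sphere_zero_iff_norm.2 (norm_eq_of_mem_sphere v)⟩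
  have hcoe : IsEmbedding fun v : sphere (0 : V) 1 ↦ ((v : V) : E) :=
    IsEmbedding.subtypeVal.comp IsEmbedding.subtypeVal
  refine ⟨j, .of_comp (hcoe.continuous.subtype_mk _) continuous_subtype_val hcoe, ?_⟩
  refine Subset.antisymm (range_subset_iff.2 fun v ↦ v.1.2) fun x hx ↦ ?_
  exact ⟨⟨⟨x, hx⟩, mem_sphere_zero_iff_norm.2 (norm_eq_of_mem_sphere x)⟩, rfl⟩

lemma function_commute_of_mem_zpowers [NormedSpace ℝ E] {ρ : G →* (E ≃ₗᵢ[ℝ] E)} {f : E → E}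
    {g₀ g : G} (hf : Function.Commute f (ρ g₀)) (hg : g ∈ Subgroup.zpowers g₀) :
    Function.Commute f (ρ g) := by
  let H : Subgroup G :=
    { carrier := {g | Function.Commute f (ρ g)}
      one_mem' := fun x ↦ by simp
      mul_mem' := fun {a b} ha hb ↦ by
        rw [mem_ofPred_eq, map_mul]
        exact ha.comp_right hb
      inv_mem' := fun {a} ha ↦ by
        rw [mem_ofPred_eq, map_inv]
        exact ha.inverses_right (ρ a).apply_symm_apply (ρ a).symm_apply_apply }
  exact Subgroup.zpowers_le.2 (show g₀ ∈ H from hf) hg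

variable [InnerProductSpace ℝ E] [FiniteDimensional ℝ E]

lemma toLinearMap_mem_unitary (e : E ≃ₗᵢ[ℝ] E) :
    e.toLinearEquiv.toLinearMap ∈ unitary (E →ₗ[ℝ] E) := by
  rw [Unitary.mem_iff, LinearMap.star_eq_adjoint, e.adjoint_toLinearMap_eq_symm]
  constructor <;> ext x <;> simp

theorem exists_mem_skewAdjoint_ker_eq_bot_forall_commute [IsCyclic G] {ρ : G →* (E ≃ₗᵢ[ℝ] E)}
    {V : Submodule ℝ E} (hVρ : ∀ x, x ∈ V ↔ ∀ g, ρ g x = x) (hE : Even (finrank ℝ E))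
    (hV : Even (finrank ℝ V)) :
    ∃ J ∈ skewAdjoint (E →ₗ[ℝ] E), J.ker = ⊥ ∧ ∀ g x, J (ρ g x) = ρ g (J x) := by
  obtain ⟨g₀, hg₀⟩ := IsCyclic.exists_generator (α := G)
  have hVeq : V = End.eigenspace (ρ g₀).toLinearEquiv.toLinearMap 1 := by
    ext x
    rw [hVρ, End.mem_eigenspace_iff, one_smul]
    refine ⟨fun h ↦ h g₀, fun h g ↦ ?_⟩
    have hconst : Function.Commute (fun _ ↦ x) (ρ g₀) := fun _ ↦ h.symm
    exact (function_commute_of_mem_zpowers hconst (hg₀ g) x).symm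
  obtain ⟨J, hJ, hker, hcomm⟩ :=
    exists_mem_skewAdjoint_ker_eq_bot_commute (toLinearMap_mem_unitary (ρ g₀)) hE (hVeq ▸ hV)
  exact ⟨J, hJ, hker, fun g ↦
    function_commute_of_mem_zpowers (LinearMap.congr_fun hcomm.eq) (hg₀ g)⟩

end CyclicGroups

section LinearSpheres

variable {G : Type*} [Group G] {n : ℕ}
    {ρ : G →* (EuclideanSpace ℝ (Fin (n + 1)) ≃ₗᵢ[ℝ] EuclideanSpace ℝ (Fin (n + 1)))}
    {V : Submodule ℝ (EuclideanSpace ℝ (Fin (n + 1)))}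

lemma mem_iff_forall_apply_eq_of_sphereAct
    (hV : ∀ x : Sph n, (∀ g, sphereAct ρ g x = x) ↔ (x : EuclideanSpace ℝ (Fin (n + 1))) ∈ V)
    (x : EuclideanSpace ℝ (Fin (n + 1))) : x ∈ V ↔ ∀ g, ρ g x = x := by
  rcases eq_or_ne x 0 with rfl | hx
  · simp
  let y : Sph n := ⟨NormedSpace.normalize x,
    mem_sphere_zero_iff_norm.2 (NormedSpace.norm_normalize hx)⟩
  have hinv : ‖x‖⁻¹ ≠ 0 := inv_ne_zero (norm_ne_zero_iff.2 hx)
  rw [← V.smul_mem_iff hinv]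
  refine (hV y).symm.trans (forall_congr' fun g ↦ ?_)
  rw [Subtype.ext_iff]
  simp [sphereAct, y, NormedSpace.normalize, hx]

lemma even_finrank_of_eqTCcover_sphereAct_two
    (hV : ∀ x : Sph n, (∀ g, sphereAct ρ g x = x) ↔ (x : EuclideanSpace ℝ (Fin (n + 1))) ∈ V)
    (h : eqTCcover (sphereAct ρ) 2) : Even (Module.finrank ℝ V) := by
  rcases subsingleton_or_nontrivial V with _ | _
  · simp [Module.finrank_zero_of_subsingleton]
  obtain ⟨j, hj, hrange⟩ := exists_isEmbedding_sphere_submodule V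
  have : Nonempty (Metric.sphere (0 : V) 1) :=
    (NormedSpace.sphere_nonempty.2 zero_le_one).to_subtype
  exact even_finrank_of_TCcover_sphere_two <|
    h.TCcover_of_range_eq_fixedSet hj (hrange.trans (ext fun x ↦ (hV x).symm))

theorem eqTC_linear_zmod_sphere_eq_two_iff_general {k : ℕ} [IsCyclic G]
    (hVk : Module.finrank ℝ V = k + 1)
    (hV : ∀ x : Sph n, (∀ g, sphereAct ρ g x = x) ↔ (x : EuclideanSpace ℝ (Fin (n + 1))) ∈ V) :
    eqTC (sphereAct ρ) = 2 ↔ Odd n ∧ Odd k := by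
  have hE : Module.finrank ℝ (EuclideanSpace ℝ (Fin (n + 1))) = n + 1 :=
    finrank_euclideanSpace_fin
  rw [eqTC, minCover_eq_two_iff]
  constructor
  · rintro ⟨h2, -⟩
    have hnEven := even_finrank_of_TCcover_sphere_two h2.TCcover
    have hkEven := even_finrank_of_eqTCcover_sphereAct_two hV h2
    rw [hE, Nat.even_add_one, Nat.not_even_iff_odd] at hnEven
    rw [hVk, Nat.even_add_one, Nat.not_even_iff_odd] at hkEven
    exact ⟨hnEven, hkEven⟩
  · rintro ⟨hn, hk⟩
    obtain ⟨J, hJ, hker, hJρ⟩ := exists_mem_skewAdjoint_ker_eq_bot_forall_commute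
      (mem_iff_forall_apply_eq_of_sphereAct hV) (hE.symm ▸ hn.add_one) (hVk.symm ▸ hk.add_one)
    have hn2 : 2 ≤ Module.finrank ℝ (EuclideanSpace ℝ (Fin (n + 1))) :=
      hE.symm ▸ Nat.succ_le_succ hn.pos
    exact ⟨eqTCcover_sphereAct_two hJ hker hJρ, fun h1 ↦ not_TCcover_sphere_one hn2 h1.TCcover⟩

end LinearSpheres

end PaperTC

/-- Let `ℤ/p` (`p` prime) act linearly on `S^n` with non-empty fixed point
set, the great `k`-sphere cut out by a pointwise-fixed subspace `V` of dimension `k + 1`,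
`0 ≤ k ≤ n`.  Then `TC_{ℤ/p}(S^n) = 2` if and only if both `n` and `k` are odd. -/
theorem eqTC_linear_zmod_sphere_eq_two_iff (p : ℕ) (hp : p.Prime) (n k : ℕ) (hkn : k ≤ n)
    (ρ : Multiplicative (ZMod p) →*
      (EuclideanSpace ℝ (Fin (n + 1)) ≃ₗᵢ[ℝ] EuclideanSpace ℝ (Fin (n + 1))))
    (hfix : (fixedSet (sphereAct ρ)).Nonempty)
    (V : Submodule ℝ (EuclideanSpace ℝ (Fin (n + 1))))
    (hV : Module.finrank ℝ V = k + 1)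
    (hVfix : ∀ g : Multiplicative (ZMod p), ∀ v ∈ V, ρ g v = v)
    (hfixV : ∀ x : ↥(Sph n),
      (∀ g : Multiplicative (ZMod p), sphereAct ρ g x = x) ↔
        (x : EuclideanSpace ℝ (Fin (n + 1))) ∈ V) :
    eqTC (sphereAct ρ) = 2 ↔ (Odd n ∧ Odd k) :=
  eqTC_linear_zmod_sphere_eq_two_iff_general hV hfixV
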